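/- arXiv:1711.02710 — 2 statements merged into one kernel-verified Lean document; each statement's English description precedes it below -/
import Mathlib

section
/- Let Λ ∈ M_n(ℝ) be a nonzero diagonal matrix with tr Λ = 0, let U be a Haar-distributed random matrix in the unitary group U(n), and define A = U Λ U*. Let B be the upper-left k×k submatrix of A, and let G be a k×k GUE random matrix, i.e., a standard Gaussian random vector in the real inner product space of k×k complex Hermitian matrices equipped with the Hilbert–Schmidt inner product ⟨A,B⟩ = tr(AB). Then W₁( (√(n²−1)/‖Λ‖_HS) · B , G ) ≤ 18 k² √n · (‖Λ‖_op² / ‖Λ‖_HS²), where W₁ between random Hermitian k×k matrices is the L¹-Wasserstein distance with respect to the Hilbert–Schmidt norm: the supremum of |E f(M₁) − E f(M₂)| over functions f on k×k Hermitian matrices that are 1-Lipschitz for ‖·‖_HS. -/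
open MeasureTheory ProbabilityTheory Matrix
open scoped Matrix

/-- Entrywise (Borel product) measurable structure on matrices. -/
instance matrixMeasurableSpace {m n α : Type*} [MeasurableSpace α] :
    MeasurableSpace (Matrix m n α) :=
  inferInstanceAs (MeasurableSpace (m → n → α))

/-- Hilbert–Schmidt norm of a real square matrix. -/
noncomputable def hsNormR {n : ℕ} (M : Matrix (Fin n) (Fin n) ℝ) : ℝ :=
  Real.sqrt ((M * Mᵀ).trace)

/-- Hilbert–Schmidt norm of a complex square matrix. -/
noncomputable def hsNormC {k : ℕ} (M : Matrix (Fin k) (Fin k) ℂ) : ℝ :=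
  Real.sqrt (((M * Mᴴ).trace).re)

/-- Operator (ℓ²→ℓ²) norm of a real square matrix. -/
noncomputable def opNormR {n : ℕ} (M : Matrix (Fin n) (Fin n) ℝ) : ℝ :=
  ‖Matrix.toEuclideanCLM (𝕜 := ℝ) M‖

/-- `γ` is the distribution of a `k × k` GUE matrix: a probability measure carried by the
Hermitian matrices such that every Hilbert–Schmidt-unit Hermitian linear functional
has a standard Gaussian distribution (i.e. a standard Gaussian on the real inner product
space of Hermitian matrices with `⟪A, B⟫ = tr (A B)`). -/
def IsGUE {k : ℕ} (γ : Measure (Matrix (Fin k) (Fin k) ℂ)) : Prop :=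
  IsProbabilityMeasure γ ∧ γ {M | M.IsHermitian} = 1 ∧
    ∀ B : Matrix (Fin k) (Fin k) ℂ, B.IsHermitian → ((B * B).trace).re = 1 →
      Measure.map (fun M => ((M * B).trace).re) γ = gaussianReal 0 1


section GaussPart

variable {E : Type*} [NormedAddCommGroup E] [InnerProductSpace ℝ E] [FiniteDimensional ℝ E]
  [MeasurableSpace E] [BorelSpace E]

lemma gauss_integrable_norm : Integrable (fun x : E => ‖x‖) (stdGaussian E) :=
  (IsGaussian.integrable_id (μ := stdGaussian E)).norm

lemma gauss_integrable_norm_sq : Integrable (fun x : E => ‖x‖ ^ 2) (stdGaussian E) :=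
  (IsGaussian.memLp_two_id (μ := stdGaussian E)).norm.integrable_sq

lemma gauss_cov (L : E →L[ℝ] ℝ) (v : E) :
    ∫ y, L y * inner ℝ v y ∂(stdGaussian E) = L v := by
  obtain ⟨u, rfl⟩ := (InnerProductSpace.toDual ℝ E).surjective L
  have h := covarianceBilin_stdGaussian (E := E)
  have h2 := congrArg (fun B => B u v) h
  have m := IsGaussian.memLp_two_id (μ := stdGaussian E)
  have hmu : ∀ w : E, MemLp (fun x => inner ℝ w x) 2 (stdGaussian E) := fun w => m.const_inner w
  have hz : ∀ w : E, ∫ x, inner ℝ w x ∂(stdGaussian E) = 0 := fun w => by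
    simpa using integral_strongDual_stdGaussian (E := E) (innerSL ℝ w)
  rw [covarianceBilin_apply_eq_cov m, covariance_eq_sub (hmu u) (hmu v), hz, hz] at h2
  rw [mul_zero, sub_zero] at h2
  exact h2

lemma gauss_ibp (q : E → ℝ) (q' : E → E →L[ℝ] ℝ) (hq : ∀ x, HasFDerivAt q (q' x) x)
    (hq'c : Continuous q') (K : ℝ) (hK : ∀ x, ‖q' x‖ ≤ K) (C : ℝ) (hC : ∀ x, |q x| ≤ C) (v : E) :
    ∫ y, q' y v ∂(stdGaussian E) = ∫ y, q y * inner ℝ v y ∂(stdGaussian E) := by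
  set γ := stdGaussian E with hγ
  have hqc : Continuous q := continuous_iff_continuousAt.2 fun x => (hq x).continuousAt
  have hK0 : 0 ≤ K := (norm_nonneg _).trans (hK 0)
  have hC0 : 0 ≤ C := (abs_nonneg _).trans (hC 0)
  let F : ℝ → E × E → ℝ := fun t p =>
    q (Real.cos t • p.1 + Real.sin t • p.2) * inner ℝ v (-Real.sin t • p.1 + Real.cos t • p.2)
  let F' : ℝ → E × E → ℝ := fun t p =>
    q' (Real.cos t • p.1 + Real.sin t • p.2) (-Real.sin t • p.1 + Real.cos t • p.2)
       * inner ℝ v (-Real.sin t • p.1 + Real.cos t • p.2)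
    + q (Real.cos t • p.1 + Real.sin t • p.2)
       * inner ℝ v (-Real.cos t • p.1 + -Real.sin t • p.2)
  have hconst : ∀ t, ∫ p, F t p ∂(γ.prod γ) = ∫ p, F 0 p ∂(γ.prod γ) := by
    intro t
    have h := IsGaussian.map_rotation_eq_self (μ := γ) (by simp [hγ]) t
    conv_rhs => rw [← h]
    rw [integral_map (by fun_prop)]
    · simp [F, ContinuousLinearMap.rotation_apply]
    · apply Continuous.aestronglyMeasurable
      fun_prop
  have hn1 : Integrable (fun p : E × E => ‖p.1‖) (γ.prod γ) :=
    gauss_integrable_norm.comp_fst _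
  have hn2 : Integrable (fun p : E × E => ‖p.2‖) (γ.prod γ) :=
    gauss_integrable_norm.comp_snd _
  have hs1 : Integrable (fun p : E × E => ‖p.1‖ ^ 2) (γ.prod γ) :=
    gauss_integrable_norm_sq.comp_fst _
  have hs2 : Integrable (fun p : E × E => ‖p.2‖ ^ 2) (γ.prod γ) :=
    gauss_integrable_norm_sq.comp_snd _
  have hrot : ∀ (a b : ℝ) (p : E × E), |a| ≤ 1 → |b| ≤ 1 → ‖a • p.1 + b • p.2‖ ≤ ‖p.1‖ + ‖p.2‖ := by
    intro a b p ha hb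
    refine (norm_add_le _ _).trans ?_
    rw [norm_smul, norm_smul, Real.norm_eq_abs, Real.norm_eq_abs]
    nlinarith [norm_nonneg p.1, norm_nonneg p.2]
  have key := hasDerivAt_integral_of_dominated_loc_of_deriv_le (μ := γ.prod γ) (F := F) (F' := F')
    (x₀ := (0:ℝ)) (s := Set.univ)
    (bound := fun p => 2 * K * ‖v‖ * (‖p.1‖ ^ 2 + ‖p.2‖ ^ 2) + C * ‖v‖ * (‖p.1‖ + ‖p.2‖)) Filter.univ_mem
    (Filter.Eventually.of_forall fun t => Continuous.aestronglyMeasurable (by fun_prop))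
    (by
      refine Integrable.mono' ((hn2.const_mul (C * ‖v‖))) (Continuous.aestronglyMeasurable (by fun_prop)) ?_
      refine Filter.Eventually.of_forall fun p => ?_
      simp only [F, Real.cos_zero, Real.sin_zero, one_smul, zero_smul, neg_zero, zero_add, add_zero]
      rw [norm_mul, Real.norm_eq_abs, mul_assoc]
      exact mul_le_mul (hC _) (norm_inner_le_norm _ _) (norm_nonneg _) hC0)
    (Continuous.aestronglyMeasurable (by fun_prop))
    (by
      refine Filter.Eventually.of_forall fun p t _ => ?_
      refine (norm_add_le _ _).trans ?_
      have hc := Real.abs_cos_le_one t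
      have hs := Real.abs_sin_le_one t
      have e1 := hrot (-Real.sin t) (Real.cos t) p (by simpa using hs) hc
      have e2 := hrot (-Real.cos t) (-Real.sin t) p (by simpa using hc) (by simpa using hs)
      have n1 := norm_nonneg p.1
      have n2 := norm_nonneg p.2
      gcongr
      · rw [norm_mul]
        have a1 : ‖q' (Real.cos t • p.1 + Real.sin t • p.2) (-Real.sin t • p.1 + Real.cos t • p.2)‖
            ≤ K * (‖p.1‖ + ‖p.2‖) := by
          refine (ContinuousLinearMap.le_opNorm _ _).trans ?_
          exact mul_le_mul (hK _) e1 (norm_nonneg _) hK0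
        have a2 : ‖inner ℝ v (-Real.sin t • p.1 + Real.cos t • p.2)‖ ≤ ‖v‖ * (‖p.1‖ + ‖p.2‖) :=
          (norm_inner_le_norm _ _).trans (by gcongr)
        calc _ ≤ (K * (‖p.1‖ + ‖p.2‖)) * (‖v‖ * (‖p.1‖ + ‖p.2‖)) :=
              mul_le_mul a1 a2 (norm_nonneg _) (by positivity)
          _ ≤ _ := by
              have : (‖p.1‖ + ‖p.2‖)^2 ≤ 2 * (‖p.1‖^2 + ‖p.2‖^2) := by nlinarith [sq_nonneg (‖p.1‖ - ‖p.2‖)]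
              have h3 : 0 ≤ K * ‖v‖ := by positivity
              nlinarith
      · rw [norm_mul, mul_assoc]
        refine mul_le_mul (hC _) ((norm_inner_le_norm _ _).trans (by gcongr)) (norm_nonneg _) hC0)
    (((hs1.add hs2).const_mul (2 * K * ‖v‖)).add ((hn1.add hn2).const_mul (C * ‖v‖)))
    (by
      refine Filter.Eventually.of_forall fun p t _ => ?_
      have d1 : HasDerivAt (fun t : ℝ => Real.cos t • p.1 + Real.sin t • p.2)
          (-Real.sin t • p.1 + Real.cos t • p.2) t :=
        ((Real.hasDerivAt_cos t).smul_const p.1).add ((Real.hasDerivAt_sin t).smul_const p.2)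
      have d2 : HasDerivAt (fun t : ℝ => -Real.sin t • p.1 + Real.cos t • p.2)
          (-Real.cos t • p.1 + -Real.sin t • p.2) t :=
        (((Real.hasDerivAt_sin t).neg).smul_const p.1).add ((Real.hasDerivAt_cos t).smul_const p.2)
      have d3 := (hq (Real.cos t • p.1 + Real.sin t • p.2)).comp_hasDerivAt t d1
      have d4 := ((innerSL ℝ v).hasFDerivAt (x := -Real.sin t • p.1 + Real.cos t • p.2)).comp_hasDerivAt t d2
      exact d3.mul d4)
  have hz : ∫ p, F' 0 p ∂(γ.prod γ) = 0 := by
    have h1 := key.2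
    have : (fun t => ∫ p, F t p ∂(γ.prod γ)) = fun _ => ∫ p, F 0 p ∂(γ.prod γ) := funext hconst
    rw [this] at h1
    exact h1.unique (hasDerivAt_const _ _)
  have hInteg := key.1
  have e0 : F' 0 = fun p => q' p.1 p.2 * inner ℝ v p.2 - q p.1 * inner ℝ v p.1 := by
    funext p
    simp [F', inner_neg_right, sub_eq_add_neg]
  have i2 : Integrable (fun p : E × E => q p.1 * inner ℝ v p.1) (γ.prod γ) := by
    refine Integrable.mono' ((hn1.const_mul (C * ‖v‖))) (Continuous.aestronglyMeasurable (by fun_prop)) ?_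
    refine Filter.Eventually.of_forall fun p => ?_
    rw [norm_mul, Real.norm_eq_abs, mul_assoc]
    exact mul_le_mul (hC _) (norm_inner_le_norm _ _) (norm_nonneg _) hC0
  have i1 : Integrable (fun p : E × E => q' p.1 p.2 * inner ℝ v p.2) (γ.prod γ) := by
    have := hInteg.add i2
    rw [e0] at this
    refine this.congr (Filter.Eventually.of_forall fun p => ?_)
    simp
  rw [e0, integral_sub i1 i2, sub_eq_zero, integral_prod _ i1] at hz
  simp only [hγ, gauss_cov] at hz ⊢
  rw [hz, integral_fun_fst (fun y => q y * inner ℝ v y)]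
  simp

end GaussPart


section PathPart

variable {E : Type*} [NormedAddCommGroup E] [InnerProductSpace ℝ E] [FiniteDimensional ℝ E]
  [MeasurableSpace E] [BorelSpace E]

lemma integrable_of_bdd_cont {Ω : Type*} [MeasurableSpace Ω] {P : Measure Ω} [IsFiniteMeasure P]
    {g : Ω → ℝ} (hg : Measurable g) (C : ℝ) (hC : ∀ x, |g x| ≤ C) : Integrable g P :=
  Integrable.of_bound hg.aestronglyMeasurable C (Filter.Eventually.of_forall hC)

lemma smart_path_smooth {Ω κ : Type*} [MeasurableSpace Ω] [Fintype κ] (P : Measure Ω)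
    [IsProbabilityMeasure P]
    (W : Ω → E) (hW : Measurable W) (δ : κ → Ω → E) (hδ : ∀ a, Measurable (δ a))
    (R : ℝ) (hWR : ∀ ω, ‖W ω‖ ≤ R) (hδR : ∀ a ω, ‖δ a ω‖ ≤ R)
    (hStein : ∀ F : E → E →L[ℝ] ℝ, ContDiff ℝ 1 F →
      ∫ ω, F (W ω) (W ω) ∂P = ∑ a, ∫ ω, fderiv ℝ F (W ω) (δ a ω) (δ a ω) ∂P)
    (f : E → ℝ) (hf : ContDiff ℝ 2 f) (K : ℝ) (h1 : ∀ x, ‖fderiv ℝ f x‖ ≤ 1)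
    (h2 : ∀ x, ‖fderiv ℝ (fderiv ℝ f) x‖ ≤ K) :
    |∫ ω, f (W ω) ∂P - ∫ x, f x ∂(stdGaussian E)| ≤
      ∫ p, ‖p.2 - ∑ a, (inner ℝ (δ a p.1) p.2 : ℝ) • δ a p.1‖ ∂(P.prod (stdGaussian E)) := by
  set γ := stdGaussian E with hγ
  obtain ⟨ω₀⟩ : Nonempty Ω := nonempty_of_isProbabilityMeasure P
  have hR0 : 0 ≤ R := (norm_nonneg _).trans (hWR ω₀)
  have hK0 : 0 ≤ K := le_trans (norm_nonneg (fderiv ℝ (fderiv ℝ f) 0)) (h2 0)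
  have hd : ∀ x, HasFDerivAt f (fderiv ℝ f x) x := fun x =>
    ((hf.differentiable (by norm_num)) x).hasFDerivAt
  have hf' : ContDiff ℝ 1 (fderiv ℝ f) := hf.fderiv_right (by norm_num)
  have hd' : ∀ x, HasFDerivAt (fderiv ℝ f) (fderiv ℝ (fderiv ℝ f) x) x := fun x =>
    ((hf'.differentiable (by norm_num)) x).hasFDerivAt
  have cf : Continuous f := hf.continuous
  have cf' : Continuous (fderiv ℝ f) := hf'.continuous
  have cf'' : Continuous (fderiv ℝ (fderiv ℝ f)) := hf'.continuous_fderiv (by norm_num)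
  have hn2 : Integrable (fun p : Ω × E => ‖p.2‖) (P.prod γ) := gauss_integrable_norm.comp_snd _
  have hlip : ∀ x, |f x| ≤ |f 0| + ‖x‖ := by
    intro x
    have := (convex_univ (𝕜 := ℝ) (E := E)).norm_image_sub_le_of_norm_fderiv_le (f := f) (C := 1)
      (fun x _ => (hd x).differentiableAt) (fun x _ => h1 x) (Set.mem_univ 0) (Set.mem_univ x)
    rw [Real.norm_eq_abs, sub_zero, one_mul] at this
    have h3 := abs_sub_abs_le_abs_sub (f x) (f 0)
    linarith
  -- the path
  let Z : ℝ → Ω × E → E := fun t p => Real.cos t • W p.1 + Real.sin t • p.2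
  let Z' : ℝ → Ω × E → E := fun t p => -Real.sin t • W p.1 + Real.cos t • p.2
  have mZ : ∀ t, Measurable (Z t) := fun t => by fun_prop
  have mZ' : ∀ t, Measurable (Z' t) := fun t => by fun_prop
  have hrot : ∀ (a b : ℝ) (p : Ω × E), |a| ≤ 1 → |b| ≤ 1 → ‖a • W p.1 + b • p.2‖ ≤ R + ‖p.2‖ := by
    intro a b p ha hb
    refine (norm_add_le _ _).trans ?_
    rw [norm_smul, norm_smul, Real.norm_eq_abs, Real.norm_eq_abs]
    have := hWR p.1
    nlinarith [norm_nonneg (W p.1), norm_nonneg p.2]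
  have hZ' : ∀ t p, ‖Z' t p‖ ≤ R + ‖p.2‖ := fun t p =>
    hrot _ _ p (by simpa using Real.abs_sin_le_one t) (Real.abs_cos_le_one t)
  have hZ : ∀ t p, ‖Z t p‖ ≤ R + ‖p.2‖ := fun t p =>
    hrot _ _ p (Real.abs_cos_le_one t) (Real.abs_sin_le_one t)
  have hE1 : ∀ x u, |fderiv ℝ f x u| ≤ ‖u‖ := fun x u => by
    have := (fderiv ℝ f x).le_opNorm u
    rw [Real.norm_eq_abs] at this
    nlinarith [h1 x, norm_nonneg u]
  have mapp : Measurable (fun q : E × E => fderiv ℝ f q.1 q.2) :=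
    Continuous.measurable (by fun_prop)
  have mapp2 : Measurable (fun q : E × E => fderiv ℝ (fderiv ℝ f) q.1 q.2 q.2) :=
    Continuous.measurable (by fun_prop)
  let ψ : ℝ → ℝ := fun t => ∫ p, f (Z t p) ∂(P.prod γ)
  have hψ : ∀ t, HasDerivAt ψ (∫ p, fderiv ℝ f (Z t p) (Z' t p) ∂(P.prod γ)) t := by
    intro t
    refine (hasDerivAt_integral_of_dominated_loc_of_deriv_le (μ := P.prod γ)
      (F := fun t p => f (Z t p)) (F' := fun t p => fderiv ℝ f (Z t p) (Z' t p))
      (x₀ := t) (s := Set.univ) (bound := fun p => R + ‖p.2‖) Filter.univ_mem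
      (Filter.Eventually.of_forall fun t => (cf.measurable.comp (mZ t)).aestronglyMeasurable)
      ?_ ?_ ?_ ((integrable_const R).add hn2) ?_).2
    · refine Integrable.mono' ((integrable_const (|f 0| + R)).add hn2)
        (cf.measurable.comp (mZ t)).aestronglyMeasurable ?_
      refine Filter.Eventually.of_forall fun p => ?_
      have := hlip (Z t p)
      have := hZ t p
      simp only [Pi.add_apply, Real.norm_eq_abs]
      linarith
    · exact (mapp.comp ((mZ t).prodMk (mZ' t))).aestronglyMeasurable
    · exact Filter.Eventually.of_forall fun p t _ => (hE1 _ _).trans (hZ' t p)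
    · refine Filter.Eventually.of_forall fun p t _ => ?_
      have d1 : HasDerivAt (fun t : ℝ => Z t p) (Z' t p) t :=
        ((Real.hasDerivAt_cos t).smul_const (W p.1)).add ((Real.hasDerivAt_sin t).smul_const p.2)
      exact (hd (Z t p)).comp_hasDerivAt t d1
  -- integrability
  have iW : ∀ t, Integrable (fun p : Ω × E => fderiv ℝ f (Z t p) (W p.1)) (P.prod γ) := fun t =>
    integrable_of_bdd_cont (mapp.comp ((mZ t).prodMk (hW.comp measurable_fst))) R
      fun p => (hE1 _ _).trans (hWR _)
  have iG : ∀ t, Integrable (fun p : Ω × E => fderiv ℝ f (Z t p) p.2) (P.prod γ) := fun t =>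
    hn2.mono' (mapp.comp ((mZ t).prodMk measurable_snd)).aestronglyMeasurable
      (Filter.Eventually.of_forall fun p => hE1 _ _)
  have hib : ∀ a ω (g : E), |(inner ℝ (δ a ω) g : ℝ)| ≤ R * ‖g‖ := fun a ω g =>
    (abs_real_inner_le_norm _ _).trans (by gcongr; exact hδR a ω)
  have mδ : ∀ a, Measurable (fun p : Ω × E => δ a p.1) := fun a => (hδ a).comp measurable_fst
  have mI : ∀ a, Measurable (fun p : Ω × E => (inner ℝ (δ a p.1) p.2 : ℝ)) := fun a =>
    (mδ a).inner measurable_snd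
  have iD : ∀ t a, Integrable (fun p : Ω × E => fderiv ℝ f (Z t p) (δ a p.1) * inner ℝ (δ a p.1) p.2)
      (P.prod γ) := fun t a => by
    refine (hn2.const_mul (R * R)).mono'
      ((mapp.comp ((mZ t).prodMk (mδ a))).mul (mI a)).aestronglyMeasurable
      (Filter.Eventually.of_forall fun p => ?_)
    rw [norm_mul, Real.norm_eq_abs, Real.norm_eq_abs, mul_assoc]
    exact mul_le_mul ((hE1 _ _).trans (hδR _ _)) (hib _ _ _) (abs_nonneg _) hR0
  have iDD : ∀ t a, Integrable (fun p : Ω × E => fderiv ℝ (fderiv ℝ f) (Z t p) (δ a p.1) (δ a p.1))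
      (P.prod γ) := fun t a => by
    refine integrable_of_bdd_cont (mapp2.comp ((mZ t).prodMk (mδ a))) (K * R * R) fun p => ?_
    have e := ((fderiv ℝ (fderiv ℝ f) (Z t p)).le_opNorm₂ (δ a p.1) (δ a p.1))
    rw [Real.norm_eq_abs] at e
    refine e.trans ?_
    have := hδR a p.1
    have := h2 (Z t p)
    gcongr
  -- Stein identity for W
  have hS : ∀ t, ∫ p, fderiv ℝ f (Z t p) (W p.1) ∂(P.prod γ) =
      Real.cos t * ∑ a, ∫ p, fderiv ℝ (fderiv ℝ f) (Z t p) (δ a p.1) (δ a p.1) ∂(P.prod γ) := by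
    intro t
    rw [integral_prod_symm _ (iW t)]
    have e : ∀ g : E, ∫ ω, fderiv ℝ f (Z t (ω, g)) (W ω) ∂P =
        ∑ a, ∫ ω, Real.cos t * fderiv ℝ (fderiv ℝ f) (Z t (ω, g)) (δ a ω) (δ a ω) ∂P := by
      intro g
      have hF : ContDiff ℝ 1 (fun w : E => fderiv ℝ f (Real.cos t • w + Real.sin t • g)) := by
        fun_prop
      have := hStein _ hF
      simp only [Z]
      rw [this]
      refine Finset.sum_congr rfl fun a _ => ?_
      refine integral_congr_ae (Filter.Eventually.of_forall fun ω => ?_)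
      have hl : HasFDerivAt (fun w : E => Real.cos t • w + Real.sin t • g)
          (Real.cos t • ContinuousLinearMap.id ℝ E) (W ω) :=
        ((hasFDerivAt_id (W ω)).const_smul (Real.cos t)).add_const _
      have := ((hd' (Real.cos t • W ω + Real.sin t • g)).comp (W ω) hl).fderiv
      simp only [Function.comp_def] at this
      simp only [this]
      simp
    simp_rw [e]
    rw [integral_finsetSum, Finset.mul_sum]
    · refine Finset.sum_congr rfl fun a _ => ?_
      rw [← integral_const_mul, integral_prod_symm _ ((iDD t a).const_mul _)]
    · intro a _
      exact ((iDD t a).const_mul _).integral_prod_right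
  -- Gaussian IBP
  have hI : ∀ t a, Real.sin t * ∫ p, fderiv ℝ (fderiv ℝ f) (Z t p) (δ a p.1) (δ a p.1) ∂(P.prod γ) =
      ∫ p, fderiv ℝ f (Z t p) (δ a p.1) * inner ℝ (δ a p.1) p.2 ∂(P.prod γ) := by
    intro t a
    rw [← integral_const_mul, integral_prod _ ((iDD t a).const_mul _), integral_prod _ (iD t a)]
    refine integral_congr_ae (Filter.Eventually.of_forall fun ω => ?_)
    have := gauss_ibp (E := E) (fun g => fderiv ℝ f (Z t (ω, g)) (δ a ω))
      (fun g => Real.sin t • (fderiv ℝ (fderiv ℝ f) (Z t (ω, g))).flip (δ a ω)) ?_ ?_ (K * R) ?_ R ?_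
      (δ a ω)
    · simpa using this
    · intro g
      have hl : HasFDerivAt (fun g : E => Z t (ω, g))
          (Real.sin t • ContinuousLinearMap.id ℝ E) g :=
        ((hasFDerivAt_id g).const_smul (Real.sin t)).const_add (Real.cos t • W ω)
      have := ((hd' (Z t (ω, g))).comp g hl).clm_apply (hasFDerivAt_const (δ a ω) g)
      refine this.congr_fderiv ?_
      ext u
      simp
    · have : Continuous (fun g => Z t (ω, g)) := by
        simp only [Z]; fun_prop
      have h3 : Continuous (fun g => (fderiv ℝ (fderiv ℝ f) (Z t (ω, g))).flip (δ a ω)) := by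
        have h4 : Continuous fun g => (ContinuousLinearMap.flipₗᵢ ℝ E E ℝ) (fderiv ℝ (fderiv ℝ f) (Z t (ω, g))) :=
          (LinearIsometryEquiv.continuous _).comp (cf''.comp this)
        exact h4.clm_apply continuous_const
      exact (continuous_const (y := Real.sin t)).smul h3
    · intro g
      rw [norm_smul]
      have a1 : ‖Real.sin t‖ ≤ 1 := Real.abs_sin_le_one t
      have a2 : ‖(fderiv ℝ (fderiv ℝ f) (Z t (ω, g))).flip (δ a ω)‖ ≤ K * R := by
        refine (ContinuousLinearMap.le_opNorm _ _).trans ?_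
        rw [ContinuousLinearMap.opNorm_flip]
        exact mul_le_mul (h2 _) (hδR _ _) (norm_nonneg _) hK0
      nlinarith [norm_nonneg ((fderiv ℝ (fderiv ℝ f) (Z t (ω, g))).flip (δ a ω))]
    · intro g
      exact (hE1 _ _).trans (hδR _ _)
  have hderiv : ∀ t, ∫ p, fderiv ℝ f (Z t p) (Z' t p) ∂(P.prod γ) =
      Real.cos t * ∫ p, fderiv ℝ f (Z t p) (p.2 - ∑ a, (inner ℝ (δ a p.1) p.2 : ℝ) • δ a p.1)
        ∂(P.prod γ) := by
    intro t
    have e1 : ∫ p, fderiv ℝ f (Z t p) (Z' t p) ∂(P.prod γ) =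
        -Real.sin t * ∫ p, fderiv ℝ f (Z t p) (W p.1) ∂(P.prod γ) +
        Real.cos t * ∫ p, fderiv ℝ f (Z t p) p.2 ∂(P.prod γ) := by
      rw [← integral_const_mul, ← integral_const_mul,
        ← integral_add ((iW t).const_mul _) ((iG t).const_mul _)]
      refine integral_congr_ae (Filter.Eventually.of_forall fun p => ?_)
      simp [Z', map_add]
    have e2 : ∫ p, fderiv ℝ f (Z t p) (p.2 - ∑ a, (inner ℝ (δ a p.1) p.2 : ℝ) • δ a p.1)
        ∂(P.prod γ) = ∫ p, fderiv ℝ f (Z t p) p.2 ∂(P.prod γ) -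
        ∑ a, ∫ p, fderiv ℝ f (Z t p) (δ a p.1) * inner ℝ (δ a p.1) p.2 ∂(P.prod γ) := by
      rw [← integral_finsetSum _ (fun a _ => iD t a),
        ← integral_sub (iG t) (integrable_finsetSum _ (fun a _ => iD t a))]
      refine integral_congr_ae (Filter.Eventually.of_forall fun p => ?_)
      simp [map_sub, map_sum, mul_comm]
    rw [e1, e2, hS t]
    simp_rw [← hI]
    rw [← Finset.mul_sum]
    ring
  have iT : Integrable (fun p : Ω × E => ‖p.2 - ∑ a, (inner ℝ (δ a p.1) p.2 : ℝ) • δ a p.1‖)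
      (P.prod γ) := by
    refine (hn2.const_mul (1 + ∑ a : κ, R * R)).mono' ?_ ?_
    · refine Measurable.aestronglyMeasurable ?_
      refine Measurable.norm ?_
      refine measurable_snd.sub (Finset.measurable_fun_sum _ fun a _ => (mI a).smul (mδ a))
    · refine Filter.Eventually.of_forall fun p => ?_
      rw [norm_norm]
      refine (norm_sub_le _ _).trans ?_
      rw [add_mul, one_mul, Finset.sum_mul]
      gcongr
      refine (norm_sum_le _ _).trans (Finset.sum_le_sum fun a _ => ?_)
      rw [norm_smul, Real.norm_eq_abs]
      have := hib a p.1 p.2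
      have := hδR a p.1
      calc _ ≤ (R * ‖p.2‖) * R := by gcongr
        _ = _ := by ring
  set T := ∫ p, ‖p.2 - ∑ a, (inner ℝ (δ a p.1) p.2 : ℝ) • δ a p.1‖ ∂(P.prod γ) with hT
  have hb : ∀ t, |∫ p, fderiv ℝ f (Z t p) (p.2 - ∑ a, (inner ℝ (δ a p.1) p.2 : ℝ) • δ a p.1)
        ∂(P.prod γ)| ≤ T := by
    intro t
    rw [← Real.norm_eq_abs, hT]
    refine (norm_integral_le_of_norm_le iT ?_)
    exact Filter.Eventually.of_forall fun p => hE1 _ _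
  have final := image_norm_le_of_norm_deriv_right_le_deriv_boundary (a := 0) (b := Real.pi / 2)
    (f := fun t => ψ t - ψ 0) (f' := fun t => ∫ p, fderiv ℝ f (Z t p) (Z' t p) ∂(P.prod γ))
    (B := fun t => Real.sin t * T) (B' := fun t => Real.cos t * T)
    (fun t _ => ((hψ t).sub_const _).continuousAt.continuousWithinAt)
    (fun t _ => ((hψ t).sub_const _).hasDerivWithinAt)
    (by simp) (fun t => (Real.hasDerivAt_sin t).mul_const T)
    (by
      intro t ht
      rw [hderiv, norm_mul, Real.norm_eq_abs, Real.norm_eq_abs, abs_of_nonneg]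
      · have hc : 0 ≤ Real.cos t := Real.cos_nonneg_of_mem_Icc ⟨by linarith [ht.1, Real.pi_pos], ht.2.le⟩
        exact mul_le_mul_of_nonneg_left (hb t) hc
      · exact Real.cos_nonneg_of_mem_Icc ⟨by linarith [ht.1, Real.pi_pos], ht.2.le⟩)
    (Set.right_mem_Icc.2 (by positivity))
  have p0 : ψ 0 = ∫ ω, f (W ω) ∂P := by
    simp only [ψ, Z, Real.cos_zero, Real.sin_zero, one_smul, zero_smul, add_zero]
    rw [integral_fun_fst (fun ω => f (W ω))]
    simp
  have p1 : ψ (Real.pi / 2) = ∫ x, f x ∂γ := by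
    simp only [ψ, Z, Real.cos_pi_div_two, Real.sin_pi_div_two, one_smul, zero_smul, zero_add]
    rw [integral_fun_snd (fun ω => f ω)]
    simp
  rw [Real.sin_pi_div_two, one_mul, p0, p1, norm_sub_rev] at final
  exact final

end PathPart


section MollPart

variable {E : Type*} [NormedAddCommGroup E] [InnerProductSpace ℝ E] [FiniteDimensional ℝ E]
  [MeasurableSpace E] [BorelSpace E]

open scoped Convolution in
lemma conv_lip {F G : Type*} [NormedAddCommGroup F] [NormedSpace ℝ F] [NormedAddCommGroup G]
    [NormedSpace ℝ G] (L : F →L[ℝ] ℝ →L[ℝ] G) (h : E → F) (hc : Continuous h)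
    (hs : HasCompactSupport h) (f : E → ℝ) (hf : LipschitzWith 1 f) (x y : E) :
    ‖(h ⋆[L, volume] f) x - (h ⋆[L, volume] f) y‖ ≤ (‖L‖ * ∫ t, ‖h t‖) * ‖x - y‖ := by
  have ex : ∀ x, ConvolutionExistsAt h f x L volume := fun x =>
    HasCompactSupport.convolutionExists_left L hs hc
      (hf.continuous.locallyIntegrable) x
  rw [convolution_def, convolution_def, ← integral_sub (ex x) (ex y), ← integral_const_mul,
    ← integral_mul_const]
  have hi : Integrable (fun t => ‖h t‖) (volume : Measure E) :=
    (hc.integrable_of_hasCompactSupport hs).norm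
  refine norm_integral_le_of_norm_le ((hi.const_mul _).mul_const _)
    (Filter.Eventually.of_forall fun t => ?_)
  rw [← map_sub]
  refine (L.le_opNorm₂ _ _).trans ?_
  have := hf.dist_le_mul (x - t) (y - t)
  rw [Real.dist_eq, dist_eq_norm] at this
  simp only [NNReal.coe_one, one_mul, sub_sub_sub_cancel_right] at this
  gcongr
  exact this

open scoped Convolution in
lemma conv_lip' {F G : Type*} [NormedAddCommGroup F] [NormedSpace ℝ F] [NormedAddCommGroup G]
    [NormedSpace ℝ G] (L : F →L[ℝ] ℝ →L[ℝ] G) (h : E → F) (hc : Continuous h)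
    (hs : HasCompactSupport h) (f : E → ℝ) (hf : LipschitzWith 1 f) :
    ∃ C : NNReal, LipschitzWith C (h ⋆[L, volume] f) := by
  refine ⟨Real.toNNReal (‖L‖ * ∫ t, ‖h t‖), LipschitzWith.of_dist_le_mul fun x y => ?_⟩
  rw [dist_eq_norm, dist_eq_norm]
  refine (conv_lip L h hc hs f hf x y).trans ?_
  gcongr
  exact Real.le_coe_toNNReal _

open scoped Convolution in
lemma mollify (f : E → ℝ) (hf : LipschitzWith 1 f) (ε : ℝ) (hε : 0 < ε) :
    ∃ (g : E → ℝ) (K : ℝ), ContDiff ℝ 2 g ∧ (∀ x, ‖fderiv ℝ g x‖ ≤ 1) ∧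
      (∀ x, ‖fderiv ℝ (fderiv ℝ g) x‖ ≤ K) ∧ ∀ x, |g x - f x| ≤ ε := by
  let φ : ContDiffBump (0 : E) := ⟨ε / 2, ε, by positivity, by linarith⟩
  have hcs : HasCompactSupport (φ.normed volume) := φ.hasCompactSupport_normed
  have hsm : ContDiff ℝ 2 (φ.normed volume) := φ.contDiff_normed (n := 2)
  have hli : LocallyIntegrable f (volume : Measure E) := hf.continuous.locallyIntegrable
  let L := ContinuousLinearMap.lsmul ℝ ℝ (E := ℝ)
  have hsm' : Continuous (fderiv ℝ (φ.normed volume)) := hsm.continuous_fderiv (by norm_num)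
  have hcs' : HasCompactSupport (fderiv ℝ (φ.normed volume)) := hcs.fderiv ℝ
  obtain ⟨C, hC⟩ := conv_lip' (L.precompL E) _ hsm' hcs' f hf
  refine ⟨φ.normed volume ⋆[L, volume] f,
    (C : ℝ), hcs.contDiff_convolution_left (n := 2) L hsm hli, ?_, ?_, ?_⟩
  · intro x
    refine norm_fderiv_le_of_lipschitz (C := 1) ℝ (LipschitzWith.of_dist_le_mul fun x y => ?_)
    have := conv_lip L (φ.normed volume) hsm.continuous hcs f hf x y
    rw [dist_eq_norm, dist_eq_norm]
    refine this.trans ?_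
    gcongr
    have e : ∫ t, ‖φ.normed volume t‖ = (1 : ℝ) := by
      rw [← φ.integral_normed (μ := (volume : Measure E))]
      refine integral_congr_ae (Filter.Eventually.of_forall fun t => ?_)
      exact abs_of_nonneg (φ.nonneg_normed t)
    rw [e, mul_one]
    exact ContinuousLinearMap.opNorm_lsmul_le
  · intro x
    have e : fderiv ℝ (φ.normed volume ⋆[L, volume] f) =
        (fderiv ℝ (φ.normed volume) ⋆[L.precompL E, volume] f) := by
      funext x
      exact (hcs.hasFDerivAt_convolution_left L (hsm.of_le (by norm_num)) hli x).fderiv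
    rw [e]
    exact norm_fderiv_le_of_lipschitz ℝ hC
  · intro x
    refine φ.dist_normed_convolution_le hf.continuous.aestronglyMeasurable fun y hy => ?_
    have := hf.dist_le_mul y x
    simp only [NNReal.coe_one, one_mul] at this
    exact this.trans (Metric.mem_ball.1 hy).le

lemma int_close {X : Type*} [MeasurableSpace X] (μ : Measure X) [IsProbabilityMeasure μ]
    {ε : ℝ} (a b : X → ℝ) (ha : Integrable a μ) (hb : Integrable b μ)
    (hab : ∀ x, |a x - b x| ≤ ε) : |∫ x, a x ∂μ - ∫ x, b x ∂μ| ≤ ε := by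
  rw [← integral_sub ha hb]
  have := norm_integral_le_of_norm_le_const (μ := μ) (f := fun x => a x - b x)
    (Filter.Eventually.of_forall hab)
  simpa using this

lemma smart_path {Ω κ : Type*} [MeasurableSpace Ω] [Fintype κ] (P : Measure Ω)
    [IsProbabilityMeasure P]
    (W : Ω → E) (hW : Measurable W) (δ : κ → Ω → E) (hδ : ∀ a, Measurable (δ a))
    (R : ℝ) (hWR : ∀ ω, ‖W ω‖ ≤ R) (hδR : ∀ a ω, ‖δ a ω‖ ≤ R)
    (hStein : ∀ F : E → E →L[ℝ] ℝ, ContDiff ℝ 1 F →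
      ∫ ω, F (W ω) (W ω) ∂P = ∑ a, ∫ ω, fderiv ℝ F (W ω) (δ a ω) (δ a ω) ∂P)
    (f : E → ℝ) (hf : LipschitzWith 1 f) :
    |∫ ω, f (W ω) ∂P - ∫ x, f x ∂(stdGaussian E)| ≤
      ∫ p, ‖p.2 - ∑ a, (inner ℝ (δ a p.1) p.2 : ℝ) • δ a p.1‖ ∂(P.prod (stdGaussian E)) := by
  refine le_of_forall_pos_le_add fun ε hε => ?_
  obtain ⟨g, K, h0, h1, h2, h3⟩ := mollify f hf (ε / 2) (by positivity)
  have key := smart_path_smooth P W hW δ hδ R hWR hδR hStein g h0 K h1 h2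
  have lipint : ∀ h : E → ℝ, Continuous h → (∀ x, |h x| ≤ |f 0| + ε + ‖x‖) →
      Integrable (fun ω => h (W ω)) P ∧ Integrable h (stdGaussian E) := by
    intro h hc hb
    constructor
    · refine integrable_of_bdd_cont (hc.measurable.comp hW) (|f 0| + ε + R) fun ω => ?_
      exact (hb _).trans (by gcongr; exact hWR ω)
    · refine ((integrable_const (|f 0| + ε)).add gauss_integrable_norm).mono'
        hc.aestronglyMeasurable (Filter.Eventually.of_forall fun x => hb x)
  have hfb : ∀ x, |f x| ≤ |f 0| + ‖x‖ := fun x => by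
    have := hf.dist_le_mul x 0
    rw [Real.dist_eq, dist_zero_right, NNReal.coe_one, one_mul] at this
    have h3 := abs_sub_abs_le_abs_sub (f x) (f 0)
    linarith
  obtain ⟨f1, f2⟩ := lipint f hf.continuous fun x => by linarith [hfb x]
  obtain ⟨g1, g2⟩ := lipint g h0.continuous fun x => by
    have h4 := abs_sub_abs_le_abs_sub (g x) (f x)
    linarith [hfb x, h3 x]
  have d1 := int_close P _ _ g1 f1 fun ω => h3 _
  have d2 := int_close (stdGaussian E) _ _ g2 f2 h3
  rw [abs_le] at *
  constructor <;> linarith [d1.1, d1.2, d2.1, d2.2, key.1, key.2]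

end MollPart


instance matBorel {m n : ℕ} : BorelSpace (Matrix (Fin m) (Fin n) ℂ) :=
  inferInstanceAs (BorelSpace (Fin m → Fin n → ℂ))

section Core
open scoped Matrix.Norms.Frobenius

lemma unitary_bdd {n : ℕ} (G : Matrix (Fin n) (Fin n) ℂ → ℝ) (hG : Continuous G) :
    ∃ C, ∀ V ∈ Matrix.unitaryGroup (Fin n) ℂ, |G V| ≤ C := by
  have hK : IsCompact (Set.pi Set.univ (fun _ : Fin n => Set.pi Set.univ
      (fun _ : Fin n => Metric.closedBall (0:ℂ) 1))) :=
    isCompact_univ_pi fun _ => isCompact_univ_pi fun _ => isCompact_closedBall _ _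
  obtain ⟨C, hC⟩ := IsCompact.exists_bound_of_continuousOn (E := ℝ)
    (α := Matrix (Fin n) (Fin n) ℂ) hK hG.continuousOn
  refine ⟨C, fun V hV => hC V ?_⟩
  intro i _ j _
  simpa using entry_norm_bound_of_unitary hV i j

lemma haar_core {n : ℕ} {Ω : Type*} [MeasurableSpace Ω] (P : Measure Ω) [IsProbabilityMeasure P]
    (U : Ω → Matrix (Fin n) (Fin n) ℂ) (hUmeas : Measurable U)
    (hUmem : ∀ ω, U ω ∈ Matrix.unitaryGroup (Fin n) ℂ)
    (hUhaar : ∀ V ∈ Matrix.unitaryGroup (Fin n) ℂ,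
      Measure.map (fun ω => V * U ω) P = Measure.map U P)
    (Λ X : Matrix (Fin n) (Fin n) ℂ) (hX : X.IsHermitian)
    (Φ : Matrix (Fin n) (Fin n) ℂ → ℝ) (hΦ : ContDiff ℝ 1 Φ) :
    ∫ ω, fderiv ℝ Φ (U ω * Λ * (U ω)ᴴ)
      (Complex.I • (X * (U ω * Λ * (U ω)ᴴ) - (U ω * Λ * (U ω)ᴴ) * X)) ∂P = 0 := by
  set Y : Matrix (Fin n) (Fin n) ℂ := Complex.I • X with hY
  have hYs : Yᴴ = -Y := by
    rw [hY, conjTranspose_smul, hX.eq]; simp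
  let V : ℝ → Matrix (Fin n) (Fin n) ℂ := fun t => NormedSpace.exp (t • Y)
  have hVs : ∀ t, (V t)ᴴ = NormedSpace.exp (t • (-Y)) := by
    intro t
    simp only [V]
    rw [← Matrix.exp_conjTranspose, conjTranspose_smul, hYs]
    simp
  have hVu : ∀ t, V t ∈ Matrix.unitaryGroup (Fin n) ℂ := by
    intro t
    rw [Matrix.mem_unitaryGroup_iff, Matrix.star_eq_conjTranspose, hVs]
    simp only [V]
    rw [smul_neg, ← Matrix.exp_add_of_commute]
    · simp
    · exact (Commute.refl _).neg_right
  have cΦ := hΦ.continuous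
  have cΦ' : Continuous (fderiv ℝ Φ) := hΦ.continuous_fderiv (by norm_num)
  let H : Matrix (Fin n) (Fin n) ℂ → ℝ := fun M => Φ (M * Λ * Mᴴ)
  let H' : Matrix (Fin n) (Fin n) ℂ → ℝ := fun M =>
    fderiv ℝ Φ (M * Λ * Mᴴ) (Y * (M * Λ * Mᴴ) - (M * Λ * Mᴴ) * Y)
  have cc : Continuous fun M : Matrix (Fin n) (Fin n) ℂ => M * Λ * Mᴴ := by fun_prop
  have cH : Continuous H := cΦ.comp cc
  have c2 : Continuous fun M : Matrix (Fin n) (Fin n) ℂ =>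
      Y * (M * Λ * Mᴴ) - (M * Λ * Mᴴ) * Y :=
    (continuous_const.mul cc).sub (cc.mul continuous_const)
  have c3 : Continuous fun M : Matrix (Fin n) (Fin n) ℂ => fderiv ℝ Φ (M * Λ * Mᴴ) := cΦ'.comp cc
  have cH' : Continuous H' := c3.clm_apply c2
  obtain ⟨C, hC⟩ := unitary_bdd H cH
  obtain ⟨C', hC'⟩ := unitary_bdd H' cH'
  have hmem : ∀ t ω, V t * U ω ∈ Matrix.unitaryGroup (Fin n) ℂ := fun t ω =>
    mul_mem (hVu t) (hUmem ω)
  have mVU : ∀ t, Measurable fun ω => V t * U ω := fun t => by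
    have : Continuous fun M : Matrix (Fin n) (Fin n) ℂ => V t * M := by fun_prop
    exact this.measurable.comp hUmeas
  have V0 : V 0 = 1 := by simp [V]
  have key := hasDerivAt_integral_of_dominated_loc_of_deriv_le (μ := P)
    (F := fun t ω => H (V t * U ω)) (F' := fun t ω => H' (V t * U ω))
    (x₀ := (0:ℝ)) (s := Set.univ) (bound := fun _ => C') Filter.univ_mem
    (Filter.Eventually.of_forall fun t => (cH.measurable.comp (mVU t)).aestronglyMeasurable)
    (integrable_of_bdd_cont (cH.measurable.comp (mVU 0)) C fun ω => hC _ (hmem 0 ω))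
    (cH'.measurable.comp (mVU 0)).aestronglyMeasurable
    (Filter.Eventually.of_forall fun ω t _ => hC' _ (hmem t ω))
    (integrable_const _)
    (by
      refine Filter.Eventually.of_forall fun ω t _ => ?_
      have d1 : HasDerivAt V (Y * V t) t := hasDerivAt_exp_smul_const' Y t
      have d2 : HasDerivAt (fun t => (V t)ᴴ) ((V t)ᴴ * (-Y)) t := by
        have := hasDerivAt_exp_smul_const (-Y) t
        simp only [hVs]
        exact this
      have d3 := (d1.mul_const (U ω * Λ * (U ω)ᴴ)).mul d2
      have d4 := ((hΦ.differentiable (by norm_num)) (V t * (U ω * Λ * (U ω)ᴴ) * (V t)ᴴ)).hasFDerivAt.comp_hasDerivAt t d3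
      convert d4 using 1
      · funext t
        simp only [H, Function.comp, conjTranspose_mul]
        congr 1
        simp only [Pi.mul_apply, Matrix.mul_assoc]
      · simp only [H', conjTranspose_mul]
        have e : V t * U ω * Λ * ((U ω)ᴴ * (V t)ᴴ) = V t * (U ω * Λ * (U ω)ᴴ) * (V t)ᴴ := by
          simp only [Matrix.mul_assoc]
        rw [e]
        congr 1
        simp only [Matrix.mul_assoc, Matrix.mul_neg, sub_eq_add_neg])
  have h1 := key.2
  have hc : (fun t => ∫ ω, H (V t * U ω) ∂P) = fun _ => ∫ ω, H (U ω) ∂P := by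
    funext t
    rw [← integral_map (φ := fun ω => V t * U ω) (mVU t).aemeasurable (f := H) cH.aestronglyMeasurable,
      hUhaar _ (hVu t), integral_map hUmeas.aemeasurable cH.aestronglyMeasurable]
  rw [hc] at h1
  have h2 := h1.unique (hasDerivAt_const _ _)
  rw [← h2]
  refine integral_congr_ae (Filter.Eventually.of_forall fun ω => ?_)
  simp [H', V0, hY, smul_sub]

end Core


section Cas

/-- orthonormal basis of the Hermitian matrices, indexed by pairs -/
noncomputable def Xb {n : ℕ} (a : Fin n × Fin n) : Matrix (Fin n) (Fin n) ℂ :=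
  Matrix.of fun i j => (1 + Complex.I) / 2 * (if a.1 = i ∧ a.2 = j then 1 else 0)
    + (1 - Complex.I) / 2 * (if a.1 = j ∧ a.2 = i then 1 else 0)

lemma Xb_herm {n : ℕ} (a : Fin n × Fin n) : (Xb a).IsHermitian := by
  ext i j
  simp only [Xb, conjTranspose_apply, of_apply, star_add, star_mul', RCLike.star_def, map_div₀,
    map_add, map_sub, map_one, Complex.conj_I, map_ofNat]
  split_ifs <;> simp <;> ring

lemma ab_sq : ((1 + Complex.I) / 2) * ((1 + Complex.I) / 2) + ((1 - Complex.I) / 2) * ((1 - Complex.I) / 2) = 0 := by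
  ring_nf; simp

lemma ab_mul : ((1 + Complex.I) / 2) * ((1 - Complex.I) / 2) = 1 / 2 := by
  ring_nf; simp; norm_num

lemma casimir {n : ℕ} (i l m j : Fin n) :
    ∑ a : Fin n × Fin n, Xb a i l * Xb a m j = if i = j ∧ l = m then 1 else 0 := by
  have e : ∀ a : Fin n × Fin n, Xb a i l * Xb a m j =
      ((1 + Complex.I) / 2) * ((1 + Complex.I) / 2) * (if a = (i, l) then (if i = m ∧ l = j then 1 else 0) else 0)
      + ((1 - Complex.I) / 2) * ((1 - Complex.I) / 2) * (if a = (l, i) then (if i = m ∧ l = j then 1 else 0) else 0)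
      + ((1 + Complex.I) / 2) * ((1 - Complex.I) / 2) * (if a = (i, l) then (if i = j ∧ l = m then 1 else 0) else 0)
      + ((1 + Complex.I) / 2) * ((1 - Complex.I) / 2) * (if a = (l, i) then (if i = j ∧ l = m then 1 else 0) else 0) := by
    rintro ⟨p, q⟩
    simp only [Xb, of_apply, Prod.mk.injEq]
    generalize (1 + Complex.I) / 2 = A
    generalize (1 - Complex.I) / 2 = B
    by_cases h1 : p = i ∧ q = l
    · obtain ⟨rfl, rfl⟩ := h1
      by_cases h2 : p = q
      · subst h2
        by_cases h3 : p = m <;> by_cases h4 : p = j <;> simp [h3, h4, and_comm] <;> split_ifs <;> (try simp_all) <;> ring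
      · simp [h2, Ne.symm h2]
        by_cases h3 : p = m <;> by_cases h4 : p = j <;> by_cases h5 : q = m <;> by_cases h6 : q = j <;>
          simp_all [and_comm]
    · by_cases h2 : p = l ∧ q = i
      · obtain ⟨rfl, rfl⟩ := h2
        simp [h1]
        by_cases h3 : p = m <;> by_cases h4 : p = j <;> by_cases h5 : q = m <;> by_cases h6 : q = j <;>
          simp_all [and_comm]
        all_goals ring
      · simp [h1, h2]
  simp only [e, Finset.sum_add_distrib, ← Finset.mul_sum, Finset.sum_ite_eq', Finset.mem_univ, if_true]
  rw [← add_mul, ab_sq, ab_mul]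
  ring

lemma cas_mul {n : ℕ} (M : Matrix (Fin n) (Fin n) ℂ) :
    ∑ a, Xb a * M * Xb a = M.trace • (1 : Matrix (Fin n) (Fin n) ℂ) := by
  ext i j
  have : (∑ a : Fin n × Fin n, Xb a * M * Xb a : Matrix (Fin n) (Fin n) ℂ) i j = ∑ m, ∑ l, M l m * ∑ a : Fin n × Fin n, Xb a i l * Xb a m j := by
    simp only [Matrix.sum_apply, Matrix.mul_apply, Finset.sum_mul, Finset.mul_sum]
    rw [Finset.sum_comm]
    refine Finset.sum_congr rfl fun m _ => ?_
    rw [Finset.sum_comm]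
    refine Finset.sum_congr rfl fun l _ => Finset.sum_congr rfl fun a _ => ?_
    ring
  rw [this]
  simp only [casimir, Matrix.smul_apply, Matrix.one_apply, Matrix.trace, Matrix.diag, smul_eq_mul]
  by_cases h : i = j <;> simp [h]

lemma cas_tr {n : ℕ} (Q : Matrix (Fin n) (Fin n) ℂ) :
    ∑ a, (Xb a * Q).trace • Xb a = Q := by
  ext i j
  have : (∑ a : Fin n × Fin n, (Xb a * Q).trace • Xb a : Matrix (Fin n) (Fin n) ℂ) i j = ∑ m, ∑ l, Q l m * ∑ a : Fin n × Fin n, Xb a m l * Xb a i j := by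
    simp only [Matrix.sum_apply, Matrix.smul_apply, Matrix.trace, Matrix.diag, Matrix.mul_apply, smul_eq_mul, Finset.sum_mul, Finset.mul_sum]
    rw [Finset.sum_comm]
    refine Finset.sum_congr rfl fun m _ => ?_
    rw [Finset.sum_comm]
    refine Finset.sum_congr rfl fun l _ => Finset.sum_congr rfl fun a _ => ?_
    ring
  rw [this]
  simp only [casimir]
  rw [Finset.sum_eq_single j, Finset.sum_eq_single i]
  · simp
  · intro b _ hb; simp [hb]
  · simp
  · intro b _ hb; simp [hb]
  · simp

/-- infinitesimal conjugation -/
noncomputable def dcom {n : ℕ} (a : Fin n × Fin n) (M : Matrix (Fin n) (Fin n) ℂ) :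
    Matrix (Fin n) (Fin n) ℂ := Complex.I • (Xb a * M - M * Xb a)

lemma dcom_dcom {n : ℕ} (A : Matrix (Fin n) (Fin n) ℂ) (hA : A.trace = 0) :
    ∑ a, dcom a (dcom a A) = -((2 * n : ℝ) • A) := by
  have e : ∀ a, dcom a (dcom a A) = -((Xb a * 1 * Xb a) * A) + (2 : ℂ) • (Xb a * A * Xb a) - A * (Xb a * 1 * Xb a) := by
    intro a
    simp only [dcom, Matrix.mul_smul, Matrix.smul_mul, ← smul_sub, smul_smul, Complex.I_mul_I,
      Matrix.mul_sub, Matrix.sub_mul, Matrix.mul_one, Matrix.mul_assoc, two_smul]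
    simp only [neg_smul, one_smul]
    abel
  simp only [e, Finset.sum_sub_distrib, Finset.sum_add_distrib, Finset.sum_neg_distrib,
    ← Finset.sum_mul, ← Finset.mul_sum, ← Finset.smul_sum, cas_mul, hA]
  ext i j
  simp
  ring

end Cas


section Stein
open scoped Matrix.Norms.Frobenius

/-- `dcom a` as a continuous linear map -/
noncomputable def dcomL {n : ℕ} (a : Fin n × Fin n) :
    Matrix (Fin n) (Fin n) ℂ →L[ℝ] Matrix (Fin n) (Fin n) ℂ :=
  LinearMap.toContinuousLinearMap
    { toFun := dcom a
      map_add' := by intro x y; simp only [dcom, Matrix.mul_add, Matrix.add_mul, ← smul_add]; congr 1; abel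
      map_smul' := by
        intro c x
        simp only [dcom, Matrix.mul_smul, Matrix.smul_mul, ← smul_sub, RingHom.id_apply]
        rw [smul_comm] }

@[simp] lemma dcomL_apply {n : ℕ} (a : Fin n × Fin n) (M : Matrix (Fin n) (Fin n) ℂ) :
    dcomL a M = dcom a M := rfl

variable {n : ℕ} {Ω : Type*} [MeasurableSpace Ω] (P : Measure Ω) [IsProbabilityMeasure P]
  (U : Ω → Matrix (Fin n) (Fin n) ℂ)

lemma conj_integrable (hUmeas : Measurable U)
    (hUmem : ∀ ω, U ω ∈ Matrix.unitaryGroup (Fin n) ℂ)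
    (L : Matrix (Fin n) (Fin n) ℂ) (G : Matrix (Fin n) (Fin n) ℂ → ℝ)
    (hG : Continuous G) : Integrable (fun ω => G (U ω * L * (U ω)ᴴ)) P := by
  have hc : Continuous fun V : Matrix (Fin n) (Fin n) ℂ => G (V * L * Vᴴ) := by fun_prop
  obtain ⟨C, hC⟩ := unitary_bdd _ hc
  exact integrable_of_bdd_cont (hc.measurable.comp hUmeas) C fun ω => hC _ (hUmem ω)

lemma conj_trace (hUmem : ∀ ω, U ω ∈ Matrix.unitaryGroup (Fin n) ℂ)
    (L : Matrix (Fin n) (Fin n) ℂ) (ω : Ω) :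
    (U ω * L * (U ω)ᴴ).trace = L.trace := by
  rw [Matrix.trace_mul_cycle]
  have := (Matrix.mem_unitaryGroup_iff'.1 (hUmem ω))
  rw [Matrix.star_eq_conjTranspose] at this
  rw [this, one_mul]

variable {E : Type*} [NormedAddCommGroup E] [NormedSpace ℝ E]

lemma haar_stein (hUmeas : Measurable U)
    (hUmem : ∀ ω, U ω ∈ Matrix.unitaryGroup (Fin n) ℂ)
    (hUhaar : ∀ V ∈ Matrix.unitaryGroup (Fin n) ℂ,
      Measure.map (fun ω => V * U ω) P = Measure.map U P)
    (L : Matrix (Fin n) (Fin n) ℂ) (hL : L.trace = 0)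
    (l : Matrix (Fin n) (Fin n) ℂ →L[ℝ] E) (F : E → E →L[ℝ] ℝ) (hF : ContDiff ℝ 1 F) :
    (2 * n : ℝ) * ∫ ω, F (l (U ω * L * (U ω)ᴴ)) (l (U ω * L * (U ω)ᴴ)) ∂P =
      ∑ a, ∫ ω, fderiv ℝ F (l (U ω * L * (U ω)ᴴ)) (l (dcom a (U ω * L * (U ω)ᴴ)))
        (l (dcom a (U ω * L * (U ω)ᴴ))) ∂P := by
  have hF1 : Continuous (fderiv ℝ F) := hF.continuous_fderiv (by norm_num)
  have hFc : Continuous F := hF.continuous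
  have key : ∀ a, ∫ ω, (fderiv ℝ F (l (U ω * L * (U ω)ᴴ)) (l (dcom a (U ω * L * (U ω)ᴴ)))
        (l (dcom a (U ω * L * (U ω)ᴴ))) + F (l (U ω * L * (U ω)ᴴ)) (l (dcom a (dcom a (U ω * L * (U ω)ᴴ))))) ∂P = 0 := by
    intro a
    have hΦ : ContDiff ℝ 1 fun M => F (l M) (l (dcomL a M)) := by fun_prop
    have := haar_core P U hUmeas hUmem hUhaar L (Xb a) (Xb_herm a) _ hΦ
    rw [← this]
    refine integral_congr_ae (Filter.Eventually.of_forall fun ω => ?_)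
    simp only
    generalize U ω * L * (U ω)ᴴ = M
    have h1 : HasFDerivAt (fun M => F (l M)) ((fderiv ℝ F (l M)).comp l) M :=
      ((hF.differentiable (by norm_num)) (l M)).hasFDerivAt.comp M l.hasFDerivAt
    have h2 := h1.clm_apply ((l.comp (dcomL a)).hasFDerivAt)
    have h3 := h2.fderiv
    simp only [ContinuousLinearMap.comp_apply] at h3
    have h4 := DFunLike.congr_fun h3 (dcom a M)
    refine Eq.trans ?_ (Eq.symm h4)
    rw [add_comm]
    rfl
  have c1 : ∀ a, Continuous fun M => fderiv ℝ F (l M) (l (dcomL a M)) (l (dcomL a M)) := by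
    intro a; fun_prop
  have c2 : ∀ a, Continuous fun M => F (l M) (l (dcomL a (dcomL a M))) := by
    intro a; fun_prop
  have i1 := fun a => conj_integrable P U hUmeas hUmem L _ (c1 a)
  have i2 := fun a => conj_integrable P U hUmeas hUmem L _ (c2 a)
  simp only [dcomL_apply] at i1 i2
  have k2 := fun a => (integral_add (i1 a) (i2 a)).symm.trans (key a)
  have k3 : ∑ a, ∫ ω, F (l (U ω * L * (U ω)ᴴ)) (l (dcom a (dcom a (U ω * L * (U ω)ᴴ)))) ∂P =
      - ((2 * n : ℝ) * ∫ ω, F (l (U ω * L * (U ω)ᴴ)) (l (U ω * L * (U ω)ᴴ)) ∂P) := by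
    rw [← integral_finsetSum _ (fun a _ => i2 a), ← integral_const_mul, ← integral_neg]
    refine integral_congr_ae (Filter.Eventually.of_forall fun ω => ?_)
    simp only
    rw [← map_sum, ← map_sum, dcom_dcom _ (by rw [conj_trace U hUmem, hL]), map_neg, map_neg, map_smul, map_smul, smul_eq_mul]
  have : ∑ a, (∫ ω, fderiv ℝ F (l (U ω * L * (U ω)ᴴ)) (l (dcom a (U ω * L * (U ω)ᴴ)))
        (l (dcom a (U ω * L * (U ω)ᴴ))) ∂P + ∫ ω, F (l (U ω * L * (U ω)ᴴ)) (l (dcom a (dcom a (U ω * L * (U ω)ᴴ)))) ∂P) = 0 :=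
    Finset.sum_eq_zero fun a _ => k2 a
  rw [Finset.sum_add_distrib, k3] at this
  linarith

end Stein


section Param
open scoped Matrix.Norms.Frobenius

/-- coordinates space for Hermitian matrices -/
abbrev EK (k : ℕ) := EuclideanSpace ℝ (Fin k × Fin k)

/-- real coordinates of a matrix -/
noncomputable def vecL (k : ℕ) : Matrix (Fin k) (Fin k) ℂ →L[ℝ] EK k :=
  LinearMap.toContinuousLinearMap
    { toFun := fun M => WithLp.toLp 2 fun p => (M p.1 p.2).re + (M p.1 p.2).im
      map_add' := by intro x y; ext p; simp; ring
      map_smul' := by intro c x; ext p; simp; ring }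

lemma vecL_apply {k : ℕ} (M : Matrix (Fin k) (Fin k) ℂ) (p : Fin k × Fin k) :
    vecL k M p = (M p.1 p.2).re + (M p.1 p.2).im := rfl

/-- Hermitian matrix from real coordinates -/
noncomputable def herm {k : ℕ} : EK k →ₗ[ℝ] Matrix (Fin k) (Fin k) ℂ where
  toFun x := Matrix.of fun i j => ⟨(x (i, j) + x (j, i)) / 2, (x (i, j) - x (j, i)) / 2⟩
  map_add' := by intro x y; ext i j <;> apply Complex.ext <;> simp <;> ring
  map_smul' := by intro c x; ext i j; apply Complex.ext <;> simp <;> ring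

lemma herm_apply {k : ℕ} (x : EK k) (i j : Fin k) :
    herm x i j = ⟨(x (i, j) + x (j, i)) / 2, (x (i, j) - x (j, i)) / 2⟩ := rfl

lemma herm_herm {k : ℕ} (x : EK k) : (herm x).IsHermitian := by
  ext i j
  rw [conjTranspose_apply, herm_apply, herm_apply]
  apply Complex.ext <;> simp <;> ring

lemma vec_herm {k : ℕ} (x : EK k) : vecL k (herm x) = x := by
  ext ⟨i, j⟩
  rw [vecL_apply, herm_apply]
  simp only
  ring

lemma herm_vec {k : ℕ} (M : Matrix (Fin k) (Fin k) ℂ) (hM : M.IsHermitian) :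
    herm (vecL k M) = M := by
  ext i j
  rw [herm_apply, vecL_apply, vecL_apply]
  have h := hM.apply i j
  have h1 : (M j i).re = (M i j).re := by rw [← h]; simp
  have h2 : (M j i).im = -(M i j).im := by rw [← h]; simp
  apply Complex.ext <;> simp only [h1, h2] <;> ring

lemma trace_re_mul {k : ℕ} (M N : Matrix (Fin k) (Fin k) ℂ) (hM : M.IsHermitian)
    (hN : N.IsHermitian) : inner ℝ (vecL k M) (vecL k N) = ((M * N).trace).re := by
  have e : inner ℝ (vecL k M) (vecL k N) =
      ∑ i, ∑ j, ((M i j).re + (M i j).im) * ((N i j).re + (N i j).im) := by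
    rw [PiLp.inner_apply, Fintype.sum_prod_type]
    simp only [vecL_apply]
    refine Finset.sum_congr rfl fun i _ => Finset.sum_congr rfl fun j _ => ?_
    simp [mul_comm]
  have e2 : ((M * N).trace).re = ∑ i, ∑ j, ((M i j).re * (N i j).re + (M i j).im * (N i j).im) := by
    simp only [Matrix.trace, Matrix.diag, Matrix.mul_apply, Complex.re_sum]
    refine Finset.sum_congr rfl fun i _ => Finset.sum_congr rfl fun j _ => ?_
    rw [← hN.apply j i]
    simp
  have e3 : ∑ i, ∑ j, ((M i j).re * (N i j).im + (M i j).im * (N i j).re) = 0 := by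
    have : ∑ i, ∑ j, ((M i j).re * (N i j).im + (M i j).im * (N i j).re) =
        - ∑ i, ∑ j, ((M i j).re * (N i j).im + (M i j).im * (N i j).re) := by
      conv_rhs => rw [Finset.sum_comm]
      rw [← Finset.sum_neg_distrib]
      refine Finset.sum_congr rfl fun i _ => ?_
      rw [← Finset.sum_neg_distrib]
      refine Finset.sum_congr rfl fun j _ => ?_
      rw [← hN.apply i j, ← hM.apply i j]
      simp
      ring
    linarith
  rw [e, e2]
  have : ∀ i j, ((M i j).re + (M i j).im) * ((N i j).re + (N i j).im) =
    ((M i j).re * (N i j).re + (M i j).im * (N i j).im) + ((M i j).re * (N i j).im + (M i j).im * (N i j).re) := by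
    intros; ring
  simp only [this, Finset.sum_add_distrib] at e3 ⊢
  linarith

lemma frob_sq {k : ℕ} (M : Matrix (Fin k) (Fin k) ℂ) : ‖M‖ ^ 2 = ((M * Mᴴ).trace).re := by
  rw [Matrix.frobenius_norm_def, ← Real.sqrt_eq_rpow, Real.sq_sqrt (by positivity)]
  simp only [Matrix.trace, Matrix.diag, Matrix.mul_apply, Complex.re_sum]
  refine Finset.sum_congr rfl fun i _ => Finset.sum_congr rfl fun j _ => ?_
  rw [conjTranspose_apply]
  simp only [RCLike.star_def, Complex.mul_conj, Complex.ofReal_re, Complex.normSq_eq_norm_sq]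
  norm_num

lemma hsC_eq {k : ℕ} (M : Matrix (Fin k) (Fin k) ℂ) : hsNormC M = ‖M‖ := by
  rw [hsNormC, ← frob_sq, Real.sqrt_sq (norm_nonneg _)]

lemma norm_vec {k : ℕ} (M : Matrix (Fin k) (Fin k) ℂ) (hM : M.IsHermitian) :
    ‖vecL k M‖ = ‖M‖ := by
  rw [← sq_eq_sq₀ (norm_nonneg _) (norm_nonneg _), ← real_inner_self_eq_norm_sq,
    trace_re_mul M M hM hM, frob_sq, hM.eq]

lemma norm_herm {k : ℕ} (x : EK k) : ‖herm x‖ = ‖x‖ := by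
  rw [← norm_vec _ (herm_herm x), vec_herm]

lemma herm_single {k : ℕ} (a : Fin k × Fin k) :
    herm (EuclideanSpace.single a (1:ℝ)) = Xb a := by
  obtain ⟨p, q⟩ := a
  ext i j
  rw [herm_apply]
  have e1 : (EuclideanSpace.single (p, q) (1:ℝ) : EK k) (i, j) = if p = i ∧ q = j then 1 else 0 := by
    rw [PiLp.single_apply]
    by_cases h : p = i ∧ q = j
    · simp [h]
    · rw [if_neg h, if_neg]
      intro h'; simp only [Prod.mk.injEq] at h'; exact h ⟨h'.1.symm, h'.2.symm⟩
  have e2 : (EuclideanSpace.single (p, q) (1:ℝ) : EK k) (j, i) = if p = j ∧ q = i then 1 else 0 := by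
    rw [PiLp.single_apply]
    by_cases h : p = j ∧ q = i
    · simp [h]
    · rw [if_neg h, if_neg]
      intro h'; simp only [Prod.mk.injEq] at h'; exact h ⟨h'.1.symm, h'.2.symm⟩
  rw [e1, e2]
  simp only [Xb, of_apply]
  split_ifs <;> apply Complex.ext <;> simp <;> norm_num

end Param


section Gue
open scoped Matrix.Norms.Frobenius

lemma gue_ae {k : ℕ} (γ : Measure (Matrix (Fin k) (Fin k) ℂ)) (hγ : IsGUE γ) :
    ∀ᵐ M ∂γ, M.IsHermitian := by
  have := hγ.1
  have hm : MeasurableSet {M : Matrix (Fin k) (Fin k) ℂ | M.IsHermitian} := by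
    have : IsClosed {M : Matrix (Fin k) (Fin k) ℂ | M.IsHermitian} :=
      isClosed_eq (continuous_id.matrix_conjTranspose) continuous_id
    exact this.measurableSet
  exact (prob_compl_eq_zero_iff hm).2 hγ.2.1

lemma gue_map {k : ℕ} (γ : Measure (Matrix (Fin k) (Fin k) ℂ)) (hγ : IsGUE γ) :
    γ.map (vecL k) = stdGaussian (EK k) := by
  have := hγ.1
  have hvm : Measurable (vecL k) := (vecL k).continuous.measurable
  have : IsProbabilityMeasure (γ.map (vecL k)) := Measure.isProbabilityMeasure_map hvm.aemeasurable
  apply Measure.ext_of_charFun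
  ext t
  rw [charFun_stdGaussian]
  by_cases ht : t = 0
  · subst ht; simp
  have hn : ‖t‖ ≠ 0 := norm_ne_zero_iff.2 ht
  set u : EK k := ‖t‖⁻¹ • t with hu
  have hun : ‖u‖ = 1 := by rw [hu, norm_smul]; simp [hn]
  have htu : t = ‖t‖ • u := by rw [hu, smul_smul, mul_inv_cancel₀ hn, one_smul]
  have h1 := hγ.2.2 (herm u) (herm_herm u) (by
    have := frob_sq (herm u)
    rw [(herm_herm u).eq, norm_herm, hun] at this
    rw [← this]; norm_num)
  have hcm : Measurable fun M : Matrix (Fin k) (Fin k) ℂ => ((M * herm u).trace).re := by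
    have : Continuous fun M : Matrix (Fin k) (Fin k) ℂ => ((M * herm u).trace).re := by fun_prop
    exact this.measurable
  have h2 : charFun (γ.map (vecL k)) t = charFun (gaussianReal 0 1) ‖t‖ := by
    rw [← h1, charFun_apply, charFun_apply, integral_map hvm.aemeasurable
      (Measurable.aestronglyMeasurable (by fun_prop)), integral_map hcm.aemeasurable
      (Measurable.aestronglyMeasurable (by fun_prop))]
    refine integral_congr_ae ?_
    filter_upwards [gue_ae γ hγ] with M hM
    have : inner ℝ (vecL k M) t = inner ℝ ((M * herm u).trace).re ‖t‖ := by
      rw [← trace_re_mul _ _ hM (herm_herm u), vec_herm]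
      conv_lhs => rw [htu]
      rw [inner_smul_right]
      simp
    rw [this]
  rw [h2, charFun_gaussianReal]
  simp
  ring_nf

lemma gue_integral {k : ℕ} (γ : Measure (Matrix (Fin k) (Fin k) ℂ)) (hγ : IsGUE γ)
    (f : Matrix (Fin k) (Fin k) ℂ → ℝ) (hf : Continuous f) :
    ∫ M, f M ∂γ = ∫ x, f (herm x) ∂(stdGaussian (EK k)) := by
  have hvm : Measurable (vecL k) := (vecL k).continuous.measurable
  have hh : Continuous (herm (k := k)) := LinearMap.continuous_of_finiteDimensional _
  rw [← gue_map γ hγ, integral_map (f := fun x => f (herm x)) hvm.aemeasurable (hf.comp hh).aestronglyMeasurable]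
  refine integral_congr_ae ?_
  filter_upwards [gue_ae γ hγ] with M hM
  rw [herm_vec M hM]

end Gue

section Block
open scoped Matrix.Norms.Frobenius
variable {n k : ℕ} (hk : k ≤ n)

/-- inclusion matrix -/
def Jm : Matrix (Fin n) (Fin k) ℂ := Matrix.of fun i a => if i = Fin.castLE hk a then 1 else 0

lemma Jm_sub (M : Matrix (Fin n) (Fin n) ℂ) :
    (Jm hk)ᴴ * M * Jm hk = M.submatrix (Fin.castLE hk) (Fin.castLE hk) := by
  ext a b
  simp [Jm, Matrix.mul_apply, conjTranspose_apply, apply_ite]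

lemma Jm_one : (Jm hk)ᴴ * Jm hk = 1 := by
  have := Jm_sub hk 1
  rw [Matrix.mul_one] at this
  rw [this]
  exact Matrix.submatrix_one _ (Fin.castLE_injective hk)

/-- compression to the upper left block -/
noncomputable def blk (M : Matrix (Fin n) (Fin n) ℂ) : Matrix (Fin k) (Fin k) ℂ :=
  M.submatrix (Fin.castLE hk) (Fin.castLE hk)

/-- coordinates of the block -/
noncomputable def lblk : Matrix (Fin n) (Fin n) ℂ →L[ℝ] EK k :=
  (vecL k).comp (LinearMap.toContinuousLinearMap
    { toFun := blk hk
      map_add' := by intro x y; rfl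
      map_smul' := by intro c x; rfl })

lemma lblk_apply (M : Matrix (Fin n) (Fin n) ℂ) : lblk hk M = vecL k (blk hk M) := rfl

lemma blk_herm (M : Matrix (Fin n) (Fin n) ℂ) (hM : M.IsHermitian) : (blk hk M).IsHermitian :=
  hM.submatrix _

lemma dcom_herm (a : Fin n × Fin n) (M : Matrix (Fin n) (Fin n) ℂ) (hM : M.IsHermitian) :
    (dcom a M).IsHermitian := by
  unfold Matrix.IsHermitian
  simp only [dcom, conjTranspose_smul, conjTranspose_sub, conjTranspose_mul, hM.eq, (Xb_herm a).eq]
  rw [← neg_sub, smul_neg]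
  simp

lemma inner_lblk (M : Matrix (Fin n) (Fin n) ℂ) (hM : M.IsHermitian) (g : EK k) :
    inner ℝ (lblk hk M) g = ((M * (Jm hk * herm g * (Jm hk)ᴴ)).trace).re := by
  conv_lhs => rw [← vec_herm g]
  rw [lblk_apply, trace_re_mul _ _ (blk_herm hk M hM) (herm_herm g), blk, ← Jm_sub]
  congr 1
  rw [← Matrix.mul_assoc, ← Matrix.mul_assoc, Matrix.trace_mul_comm _ (Jm hk)ᴴ]
  simp only [Matrix.mul_assoc]

lemma trace_herm_real {m : ℕ} (X Q : Matrix (Fin m) (Fin m) ℂ) (hX : X.IsHermitian) (hQ : Q.IsHermitian) :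
    (((X * Q).trace).re : ℂ) = (X * Q).trace := by
  rw [← Complex.conj_eq_iff_re]
  have : star ((X * Q).trace) = ((X * Q)ᴴ).trace := (Matrix.trace_conjTranspose _).symm
  rw [conjTranspose_mul, hX.eq, hQ.eq, Matrix.trace_mul_comm Q X] at this
  exact this

lemma T_formula (A : Matrix (Fin n) (Fin n) ℂ) (hA : A.IsHermitian) (g : EK k) :
    ∑ a, (inner ℝ (lblk hk (dcom a A)) g : ℝ) • lblk hk (dcom a A) =
      vecL k (blk hk (A * A) * herm g + herm g * blk hk (A * A)
        - (2:ℝ) • (blk hk A * herm g * blk hk A)) := by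
  set G : Matrix (Fin n) (Fin n) ℂ := Jm hk * herm g * (Jm hk)ᴴ with hG
  have hGh : G.IsHermitian := by
    unfold Matrix.IsHermitian
    simp only [hG, conjTranspose_mul, conjTranspose_conjTranspose, (herm_herm g).eq, Matrix.mul_assoc]
  set Q : Matrix (Fin n) (Fin n) ℂ := Complex.I • (A * G - G * A) with hQ
  have hQh : Q.IsHermitian := by
    unfold Matrix.IsHermitian
    simp only [hQ, conjTranspose_smul, conjTranspose_sub, conjTranspose_mul, hA.eq, hGh.eq]
    rw [← neg_sub, smul_neg]
    simp
  have e1 : ∀ a, (dcom a A * G).trace = (Xb a * Q).trace := by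
    intro a
    simp only [dcom, hQ, Matrix.smul_mul, Matrix.mul_smul, Matrix.trace_smul, Matrix.sub_mul, Matrix.mul_sub, Matrix.trace_sub]
    congr 2
    · rw [Matrix.mul_assoc]
    · rw [Matrix.mul_assoc, Matrix.trace_mul_comm, Matrix.mul_assoc]
  have e2 : ∀ a, (inner ℝ (lblk hk (dcom a A)) g : ℝ) • lblk hk (dcom a A) =
      lblk hk ((Xb a * Q).trace • dcom a A) := by
    intro a
    rw [inner_lblk hk _ (dcom_herm a A hA), ← hG, e1, ← map_smul]
    congr 1
    rw [← trace_herm_real _ _ (Xb_herm a) hQh]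
    ext i j
    simp
  have e3 : ∑ a, (Xb a * Q).trace • dcom a A = A * A * G + G * (A * A) - (2:ℝ) • (A * G * A) := by
    have : ∀ a, (Xb a * Q).trace • dcom a A =
        Complex.I • (((Xb a * Q).trace • Xb a) * A - A * ((Xb a * Q).trace • Xb a)) := by
      intro a
      simp only [dcom, Matrix.smul_mul, Matrix.mul_smul]
      rw [← smul_sub, smul_comm]
    simp only [this]
    rw [← Finset.smul_sum, Finset.sum_sub_distrib, ← Finset.sum_mul, ← Finset.mul_sum, cas_tr, hQ]
    simp only [Matrix.smul_mul, Matrix.mul_smul, ← smul_sub, smul_smul, Complex.I_mul_I, neg_smul, one_smul,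
      Matrix.mul_sub, Matrix.sub_mul, Matrix.mul_assoc, two_smul]
    abel
  simp only [e2]
  rw [← map_sum, e3, lblk_apply]
  congr 1
  simp only [blk, ← Jm_sub]
  have J1 := Jm_one hk
  simp only [Matrix.mul_add, Matrix.mul_sub, Matrix.add_mul, Matrix.sub_mul, Matrix.mul_smul, Matrix.smul_mul]
  congr 1
  · congr 1
    · rw [hG]
      simp only [Matrix.mul_assoc, J1, Matrix.mul_one]
    · rw [hG]
      simp only [← Matrix.mul_assoc, J1, Matrix.one_mul]
  · rw [hG]
    simp only [Matrix.mul_assoc]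

end Block


section Mom
open scoped Matrix.Norms.Frobenius
variable {n k : ℕ} (hk : k ≤ n)

lemma sumsq (A : Matrix (Fin n) (Fin n) ℂ) (hA : A.IsHermitian) :
    ∑ a, ‖lblk hk (dcom a A)‖ ^ 2 ≤ 2 * k * ((blk hk (A * A)).trace).re := by
  have hS : (blk hk (A * A)).IsHermitian := blk_herm hk _ (by
    unfold Matrix.IsHermitian; rw [conjTranspose_mul, hA.eq])
  have hB := blk_herm hk A hA
  have e1 : ∀ v : EK k, ‖v‖ ^ 2 = ∑ p, inner ℝ v (EuclideanSpace.single p (1:ℝ)) * inner ℝ v (EuclideanSpace.single p (1:ℝ)) := by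
    intro v
    rw [EuclideanSpace.norm_sq_eq]
    refine Finset.sum_congr rfl fun p _ => ?_
    simp [EuclideanSpace.inner_single_right, sq]
  have hT : ∀ p, (blk hk (A * A) * Xb p + Xb p * blk hk (A * A)
        - (2:ℝ) • (blk hk A * Xb p * blk hk A)).IsHermitian := by
    intro p
    unfold Matrix.IsHermitian
    simp only [conjTranspose_sub, conjTranspose_add, conjTranspose_smul, conjTranspose_mul, hS.eq, hB.eq,
      (Xb_herm p).eq, star_trivial, Matrix.mul_assoc]
    rw [add_comm]
  have e2 : ∑ a, ‖lblk hk (dcom a A)‖ ^ 2 = ∑ p, (((blk hk (A * A) * Xb p + Xb p * blk hk (A * A)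
        - (2:ℝ) • (blk hk A * Xb p * blk hk A)) * Xb p).trace).re := by
    simp only [e1]
    rw [Finset.sum_comm]
    refine Finset.sum_congr rfl fun p _ => ?_
    have h := T_formula hk A hA (EuclideanSpace.single p (1:ℝ))
    rw [herm_single] at h
    rw [← trace_re_mul _ _ (hT p) (Xb_herm p), ← h, sum_inner]
    refine Finset.sum_congr rfl fun a _ => ?_
    rw [inner_smul_left, ← herm_single, vec_herm]
    simp
  have e3 : ∑ p, ((blk hk (A * A) * Xb p + Xb p * blk hk (A * A)
        - (2:ℝ) • (blk hk A * Xb p * blk hk A)) * Xb p) =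
      blk hk (A * A) * ((k:ℂ) • 1) + (blk hk (A * A)).trace • 1 - (2:ℝ) • (blk hk A * ((blk hk A).trace • 1)) := by
    have h1 := cas_mul (1 : Matrix (Fin k) (Fin k) ℂ)
    simp only [Matrix.mul_one, Matrix.trace_one, Fintype.card_fin] at h1
    rw [← h1, ← cas_mul, ← cas_mul, Finset.mul_sum, Finset.mul_sum, Finset.smul_sum, ← Finset.sum_add_distrib,
      ← Finset.sum_sub_distrib]
    refine Finset.sum_congr rfl fun p _ => ?_
    simp only [Matrix.add_mul, Matrix.sub_mul, Matrix.smul_mul, Matrix.mul_assoc]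
  rw [e2, ← Complex.re_sum, ← Matrix.trace_sum, e3]
  have hr := trace_herm_real _ _ hB Matrix.isHermitian_one
  rw [Matrix.mul_one] at hr
  obtain ⟨t, ht⟩ : ∃ t : ℝ, (blk hk A).trace = t := ⟨_, hr.symm⟩
  simp only [Matrix.mul_smul, Matrix.mul_one, Matrix.trace_sub, Matrix.trace_add, Matrix.trace_smul,
    Matrix.trace_one, Fintype.card_fin, ht]
  simp
  nlinarith [sq_nonneg t]

variable {Ω : Type*} [MeasurableSpace Ω] (P : Measure Ω) [IsProbabilityMeasure P]
  (U : Ω → Matrix (Fin n) (Fin n) ℂ)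

/-- real part of the trace of the block -/
noncomputable def trL : Matrix (Fin n) (Fin n) ℂ →L[ℝ] ℝ :=
  LinearMap.toContinuousLinearMap
    { toFun := fun M => ((blk hk M).trace).re
      map_add' := by intro x y; simp [blk, Matrix.trace, Finset.sum_add_distrib]
      map_smul' := by intro c x; simp [blk, Matrix.trace, Finset.mul_sum] }

lemma trL_apply (M : Matrix (Fin n) (Fin n) ℂ) : trL hk M = ((blk hk M).trace).re := rfl

lemma conj_herm (V L : Matrix (Fin n) (Fin n) ℂ) (hL : L.IsHermitian) : (V * L * Vᴴ).IsHermitian := by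
  unfold Matrix.IsHermitian
  simp only [conjTranspose_mul, conjTranspose_conjTranspose, hL.eq, Matrix.mul_assoc]

lemma conj_sq (V L : Matrix (Fin n) (Fin n) ℂ) (hV : V ∈ Matrix.unitaryGroup (Fin n) ℂ) :
    (V * L * Vᴴ) * (V * L * Vᴴ) = V * (L * L) * Vᴴ := by
  have := Matrix.mem_unitaryGroup_iff'.1 hV
  rw [Matrix.star_eq_conjTranspose] at this
  calc (V * L * Vᴴ) * (V * L * Vᴴ) = V * L * (Vᴴ * V) * L * Vᴴ := by simp only [Matrix.mul_assoc]
    _ = _ := by rw [this]; simp only [Matrix.mul_one, Matrix.mul_assoc]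

lemma conj_one (V : Matrix (Fin n) (Fin n) ℂ) (hV : V ∈ Matrix.unitaryGroup (Fin n) ℂ) (c : ℂ) :
    V * (c • 1) * Vᴴ = c • 1 := by
  have := Matrix.mem_unitaryGroup_iff.1 hV
  rw [Matrix.star_eq_conjTranspose] at this
  rw [Matrix.mul_smul, Matrix.mul_one, Matrix.smul_mul, this]

lemma mom1 (hUmeas : Measurable U)
    (hUmem : ∀ ω, U ω ∈ Matrix.unitaryGroup (Fin n) ℂ)
    (hUhaar : ∀ V ∈ Matrix.unitaryGroup (Fin n) ℂ,
      Measure.map (fun ω => V * U ω) P = Measure.map U P)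
    (hn : 0 < n) (L : Matrix (Fin n) (Fin n) ℂ) (hL : L.trace = 0) :
    ∫ ω, trL hk (U ω * L * (U ω)ᴴ) ∂P = 0 := by
  have h := haar_stein P U hUmeas hUmem hUhaar L hL (trL hk) (fun _ => ContinuousLinearMap.id ℝ ℝ) contDiff_const
  simp at h
  rcases h with h | h
  · omega
  · exact h

lemma mom2 (hUmeas : Measurable U)
    (hUmem : ∀ ω, U ω ∈ Matrix.unitaryGroup (Fin n) ℂ)
    (hUhaar : ∀ V ∈ Matrix.unitaryGroup (Fin n) ℂ,
      Measure.map (fun ω => V * U ω) P = Measure.map U P)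
    (L : Matrix (Fin n) (Fin n) ℂ) (hL : L.trace = 0) (hLh : L.IsHermitian) :
    (n : ℝ) * ∫ ω, ‖lblk hk (U ω * L * (U ω)ᴴ)‖ ^ 2 ∂P ≤ k * ∫ ω, trL hk (U ω * (L * L) * (U ω)ᴴ) ∂P := by
  have h := haar_stein P U hUmeas hUmem hUhaar L hL (lblk hk) (fun x => innerSL ℝ x) (innerSL ℝ).contDiff
  have e : ∀ x, fderiv ℝ (fun x : EK k => innerSL ℝ x) x = innerSL ℝ := fun x => (innerSL ℝ).fderiv
  have h : (2 * n : ℝ) * ∫ ω, ‖lblk hk (U ω * L * (U ω)ᴴ)‖ ^ 2 ∂P =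
      ∑ a, ∫ ω, ‖lblk hk (dcom a (U ω * L * (U ω)ᴴ))‖ ^ 2 ∂P := by
    simp only [e] at h
    simp only [← real_inner_self_eq_norm_sq]
    exact h
  rw [← integral_finsetSum] at h
  · have c1 := conj_integrable P U hUmeas hUmem L (fun M => ∑ a, ‖lblk hk (dcomL a M)‖ ^ 2) (by fun_prop)
    have c2 := conj_integrable P U hUmeas hUmem (L * L) (trL hk) (by fun_prop)
    have := integral_mono c1 (c2.const_mul (2 * k)) (fun ω => by
      have := sumsq hk (U ω * L * (U ω)ᴴ) (conj_herm _ _ hLh)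
      rw [conj_sq _ _ (hUmem ω)] at this
      exact this)
    rw [integral_const_mul] at this
    simp only [dcomL_apply] at this
    linarith
  · intro a _
    exact conj_integrable P U hUmeas hUmem L (fun M => ‖lblk hk (dcomL a M)‖ ^ 2) (by fun_prop)

lemma diagC_herm (d : Fin n → ℝ) : (Matrix.diagonal fun i => (d i : ℂ)).IsHermitian := by
  unfold Matrix.IsHermitian
  rw [diagonal_conjTranspose]
  congr 1
  ext i
  simp

lemma diagC_trace (d : Fin n → ℝ) : (Matrix.diagonal fun i => (d i : ℂ)).trace = ((∑ i, d i : ℝ) : ℂ) := by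
  rw [Matrix.trace_diagonal]; simp

lemma diag_split (hn : 0 < n) (d : Fin n → ℝ) :
    (Matrix.diagonal fun i => (d i : ℂ)) * (Matrix.diagonal fun i => (d i : ℂ)) =
      (Matrix.diagonal fun i => ((d i ^ 2 - (∑ i, d i ^ 2) / n : ℝ) : ℂ)) + (((∑ i, d i ^ 2) / n : ℝ) : ℂ) • 1 := by
  rw [diagonal_mul_diagonal, smul_one_eq_diagonal, diagonal_add]
  congr 1
  ext i
  push_cast
  ring

lemma split_sum (hn : 0 < n) (d : Fin n → ℝ) : ∑ i, (d i ^ 2 - (∑ i, d i ^ 2) / n) = 0 := by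
  rw [Finset.sum_sub_distrib]
  simp
  field_simp
  simp

lemma mom3 (hUmeas : Measurable U)
    (hUmem : ∀ ω, U ω ∈ Matrix.unitaryGroup (Fin n) ℂ)
    (hUhaar : ∀ V ∈ Matrix.unitaryGroup (Fin n) ℂ,
      Measure.map (fun ω => V * U ω) P = Measure.map U P)
    (hn : 0 < n) (d : Fin n → ℝ) (hd : ∑ i, d i = 0) :
    ∫ ω, ‖lblk hk (U ω * (Matrix.diagonal fun i => (d i : ℂ)) * (U ω)ᴴ)‖ ^ 2 ∂P ≤ k ^ 2 * (∑ i, d i ^ 2) / n ^ 2 := by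
  have h2 := mom2 hk P U hUmeas hUmem hUhaar (Matrix.diagonal fun i => (d i : ℂ))
    (by rw [diagC_trace, hd]; simp) (diagC_herm d)
  have h1 := mom1 hk P U hUmeas hUmem hUhaar hn (Matrix.diagonal fun i => ((d i ^ 2 - (∑ i, d i ^ 2) / n : ℝ) : ℂ))
    (by rw [diagC_trace (fun i => d i ^ 2 - (∑ i, d i ^ 2) / n), split_sum hn d]; simp)
  have e : ∫ ω, trL hk (U ω * ((Matrix.diagonal fun i => (d i : ℂ)) * (Matrix.diagonal fun i => (d i : ℂ))) * (U ω)ᴴ) ∂P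
      = k * ((∑ i, d i ^ 2) / n) := by
    rw [diag_split hn]
    generalize (∑ i, d i ^ 2) / (n:ℝ) = c at h1 ⊢
    simp only [Matrix.mul_add, Matrix.add_mul, map_add, conj_one _ (hUmem _)]
    rw [integral_add (conj_integrable P U hUmeas hUmem _ (trL hk) (by fun_prop)) (integrable_const _), h1]
    simp only [trL_apply, blk]
    simp [Matrix.submatrix_smul, Matrix.trace_smul, Matrix.submatrix_one _ (Fin.castLE_injective hk)]
    try ring
  rw [e] at h2
  have hn' : (0:ℝ) < n := by exact_mod_cast hn
  rw [le_div_iff₀ (by positivity)]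
  have := mul_le_mul_of_nonneg_left h2 hn'.le
  field_simp at this
  nlinarith

end Mom


section Asm
open scoped Matrix.Norms.Frobenius
variable {n k : ℕ} (hk : k ≤ n)

lemma gauss_sq {k : ℕ} : ∫ x, ‖x‖ ^ 2 ∂(stdGaussian (EK k)) = (k : ℝ) ^ 2 := by
  have e : ∀ x : EK k, ‖x‖ ^ 2 = ∑ p, (innerSL ℝ (EuclideanSpace.single p (1:ℝ)) x) * inner ℝ (EuclideanSpace.single p (1:ℝ)) x := by
    intro x
    rw [EuclideanSpace.norm_sq_eq]
    refine Finset.sum_congr rfl fun p _ => ?_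
    simp [innerSL_apply_apply, EuclideanSpace.inner_single_left, sq]
  simp only [e]
  rw [integral_finsetSum]
  · simp only [gauss_cov]
    simp [innerSL_apply_apply, sq]
  · intro p _
    refine (gauss_integrable_norm_sq (E := EK k)).mono (Continuous.aestronglyMeasurable (by fun_prop)) ?_
    refine Filter.Eventually.of_forall fun x => ?_
    simp only [innerSL_apply_apply, EuclideanSpace.inner_single_left]
    have h := EuclideanSpace.norm_sq_eq x
    rw [Real.norm_of_nonneg (sq_nonneg _), h]
    have : ‖x p‖ ^ 2 ≤ ∑ i, ‖x i‖ ^ 2 := Finset.single_le_sum (f := fun i => ‖x i‖ ^ 2) (fun i _ => by positivity) (Finset.mem_univ p)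
    simpa [sq] using this

lemma sq_int_le {Ω : Type*} [MeasurableSpace Ω] (P : Measure Ω) [IsProbabilityMeasure P] (X : Ω → ℝ)
    (h1 : Integrable X P) (h2 : Integrable (fun ω => X ω ^ 2) P) :
    (∫ ω, X ω ∂P) ^ 2 ≤ ∫ ω, X ω ^ 2 ∂P := by
  set m := ∫ ω, X ω ∂P with hm
  have h : 0 ≤ ∫ ω, (X ω - m) ^ 2 ∂P := integral_nonneg fun ω => sq_nonneg _
  have e : ∀ ω, (X ω - m) ^ 2 = X ω ^ 2 - 2 * m * X ω + m ^ 2 := by intro ω; ring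
  simp only [e] at h
  rw [integral_add (f := fun ω => X ω ^ 2 - 2 * m * X ω) (h2.sub (h1.const_mul _)) (integrable_const _), integral_sub h2 (h1.const_mul _),
    integral_const_mul, ← hm] at h
  simp at h
  nlinarith

lemma gauss_norm_le {k : ℕ} : ∫ x, ‖x‖ ∂(stdGaussian (EK k)) ≤ (k : ℝ) := by
  refine abs_le_of_sq_le_sq' ?_ (Nat.cast_nonneg k) |>.2
  rw [← gauss_sq]
  exact sq_int_le _ _ gauss_integrable_norm gauss_integrable_norm_sq

lemma point_bound (hn : 0 < n) (d : Fin n → ℝ) (hs : 0 < ∑ i, d i ^ 2) (c : ℝ)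
    (hc : c ^ 2 * ∑ i, d i ^ 2 = n ^ 2 - 1) (V : Matrix (Fin n) (Fin n) ℂ)
    (hV : V ∈ Matrix.unitaryGroup (Fin n) ℂ) (g : EK k) :
    ‖g - ∑ a, (inner ℝ (((Real.sqrt (2 * n))⁻¹) • (c • lblk hk) (dcom a (V * (Matrix.diagonal fun i => (d i : ℂ)) * Vᴴ))) g : ℝ) •
      (((Real.sqrt (2 * n))⁻¹) • (c • lblk hk) (dcom a (V * (Matrix.diagonal fun i => (d i : ℂ)) * Vᴴ)))‖
    ≤ ‖g‖ * (1 / n ^ 2 + c ^ 2 / n * ‖lblk hk (V * (Matrix.diagonal fun i => ((d i ^ 2 - (∑ i, d i ^ 2) / n : ℝ) : ℂ)) * Vᴴ)‖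
      + c ^ 2 / n * ‖lblk hk (V * (Matrix.diagonal fun i => (d i : ℂ)) * Vᴴ)‖ ^ 2) := by
  have hn' : (0:ℝ) < n := by exact_mod_cast hn
  set L := (Matrix.diagonal fun i => (d i : ℂ)) with hL
  set L' := (Matrix.diagonal fun i => ((d i ^ 2 - (∑ i, d i ^ 2) / n : ℝ) : ℂ)) with hL'
  set A := V * L * Vᴴ with hA
  set h := ∑ i, d i ^ 2 with hh
  have hAh : A.IsHermitian := conj_herm V L (diagC_herm d)
  have hDh : (V * L' * Vᴴ).IsHermitian := conj_herm V L' (diagC_herm _)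
  set B := blk hk A with hB
  set D := blk hk (V * L' * Vᴴ) with hD
  have hBh : B.IsHermitian := blk_herm hk A hAh
  have hDkh : D.IsHermitian := blk_herm hk _ hDh
  have eS : blk hk (A * A) = D + (h / n : ℝ) • 1 := by
    rw [hA, conj_sq V L hV, hL, diag_split hn, Matrix.mul_add, Matrix.add_mul, conj_one V hV]
    ext i j
    simp [blk, hD, Matrix.one_apply, hL', hh]
  have hsq : Real.sqrt (2 * n) ^ 2 = 2 * n := Real.sq_sqrt (by positivity)
  have hsq0 : Real.sqrt (2 * n) ≠ 0 := by positivity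
  set G := herm g with hG
  have e1 : ∑ a, (inner ℝ (((Real.sqrt (2 * n))⁻¹) • (c • lblk hk) (dcom a A)) g : ℝ) •
      (((Real.sqrt (2 * n))⁻¹) • (c • lblk hk) (dcom a A)) =
      (c ^ 2 / (2 * n)) • ∑ a, (inner ℝ (lblk hk (dcom a A)) g : ℝ) • lblk hk (dcom a A) := by
    rw [Finset.smul_sum]
    refine Finset.sum_congr rfl fun a _ => ?_
    rw [_root_.smul_apply, inner_smul_left, inner_smul_left]
    simp only [smul_smul, conj_trivial]
    congr 1
    generalize Real.sqrt (2 * n) = r at hsq hsq0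
    rw [← hsq]
    field_simp
  have e2 : g - (c ^ 2 / (2 * n)) • vecL k (blk hk (A * A) * G + G * blk hk (A * A) - (2:ℝ) • (B * G * B)) =
      vecL k ((1 / n ^ 2 : ℝ) • G - (c ^ 2 / (2 * n)) • (D * G + G * D) + (c ^ 2 / n) • (B * G * B)) := by
    conv_lhs => rw [← vec_herm g]
    rw [← map_smul, ← map_sub, ← hG, eS]
    congr 1
    simp only [Matrix.add_mul, Matrix.mul_add, Matrix.smul_mul, Matrix.mul_smul, Matrix.one_mul, Matrix.mul_one]
    have : (c ^ 2 / (2 * n)) * (h / n) * 2 = 1 - 1 / (n:ℝ) ^ 2 := by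
      field_simp
      linarith
    have t1 : (1 / (n:ℝ) ^ 2) = 1 - (c ^ 2 / (2 * n)) * (h / n) * 2 := by rw [this]; ring
    rw [t1]
    have t2 : c ^ 2 / (n:ℝ) = c ^ 2 / (2 * n) * 2 := by field_simp
    rw [t2]
    module
  have hZ : ((1 / n ^ 2 : ℝ) • G - (c ^ 2 / (2 * n)) • (D * G + G * D) + (c ^ 2 / n) • (B * G * B)).IsHermitian := by
    unfold Matrix.IsHermitian
    simp only [conjTranspose_sub, conjTranspose_add, conjTranspose_smul, conjTranspose_mul, hBh.eq, hDkh.eq,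
      (herm_herm g).eq, hG, star_trivial, Matrix.mul_assoc]
    rw [add_comm (herm g * D)]
  rw [e1, T_formula hk A hAh g, e2, norm_vec _ hZ, lblk_apply, lblk_apply, norm_vec _ hDkh, norm_vec _ hBh, ← norm_herm g, ← hG]
  have n1 : ‖D * G‖ ≤ ‖D‖ * ‖G‖ := Matrix.frobenius_norm_mul _ _
  have n2 : ‖G * D‖ ≤ ‖G‖ * ‖D‖ := Matrix.frobenius_norm_mul _ _
  have n3 : ‖B * G * B‖ ≤ ‖B‖ * ‖G‖ * ‖B‖ := (Matrix.frobenius_norm_mul _ _).trans (by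
    gcongr; exact Matrix.frobenius_norm_mul _ _)
  have p1 : 0 ≤ c ^ 2 / (2 * (n:ℝ)) := by positivity
  have p2 : 0 ≤ c ^ 2 / (n:ℝ) := by positivity
  calc _ ≤ ‖(1 / n ^ 2 : ℝ) • G‖ + ‖(c ^ 2 / (2 * n)) • (D * G + G * D)‖ + ‖(c ^ 2 / n) • (B * G * B)‖ :=
        (norm_add_le _ _).trans (by gcongr; exact norm_sub_le _ _)
    _ = (1 / n ^ 2 : ℝ) * ‖G‖ + (c ^ 2 / (2 * n)) * ‖D * G + G * D‖ + (c ^ 2 / n) * ‖B * G * B‖ := by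
        rw [norm_smul, norm_smul, norm_smul, Real.norm_of_nonneg p1, Real.norm_of_nonneg p2, Real.norm_of_nonneg (by positivity)]
    _ ≤ (1 / n ^ 2 : ℝ) * ‖G‖ + (c ^ 2 / (2 * n)) * (‖D‖ * ‖G‖ + ‖G‖ * ‖D‖) + (c ^ 2 / n) * (‖B‖ * ‖G‖ * ‖B‖) := by
        gcongr
        exact (norm_add_le _ _).trans (add_le_add n1 n2)
    _ = _ := by field_simp; ring

variable {Ω : Type*} [MeasurableSpace Ω] (P : Measure Ω) [IsProbabilityMeasure P]
  (U : Ω → Matrix (Fin n) (Fin n) ℂ)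

lemma w1_bound (hUmeas : Measurable U)
    (hUmem : ∀ ω, U ω ∈ Matrix.unitaryGroup (Fin n) ℂ)
    (hUhaar : ∀ V ∈ Matrix.unitaryGroup (Fin n) ℂ,
      Measure.map (fun ω => V * U ω) P = Measure.map U P)
    (hn : 0 < n) (d : Fin n → ℝ) (hd : ∑ i, d i = 0) (hs : 0 < ∑ i, d i ^ 2) (c : ℝ)
    (hc : c ^ 2 * ∑ i, d i ^ 2 = n ^ 2 - 1) (f : EK k → ℝ) (hf : LipschitzWith 1 f) :
    |∫ ω, f (c • lblk hk (U ω * (Matrix.diagonal fun i => (d i : ℂ)) * (U ω)ᴴ)) ∂P - ∫ x, f x ∂(stdGaussian (EK k))| ≤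
      k * (1 / n ^ 2 + c ^ 2 / n * ∫ ω, ‖lblk hk (U ω * (Matrix.diagonal fun i => ((d i ^ 2 - (∑ i, d i ^ 2) / n : ℝ) : ℂ)) * (U ω)ᴴ)‖ ∂P
      + c ^ 2 / n * ∫ ω, ‖lblk hk (U ω * (Matrix.diagonal fun i => (d i : ℂ)) * (U ω)ᴴ)‖ ^ 2 ∂P) := by
  have hn' : (0:ℝ) < n := by exact_mod_cast hn
  set L := (Matrix.diagonal fun i => (d i : ℂ)) with hL
  set L' := (Matrix.diagonal fun i => ((d i ^ 2 - (∑ i, d i ^ 2) / n : ℝ) : ℂ)) with hL'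
  have cc : Continuous fun V : Matrix (Fin n) (Fin n) ℂ => V * L * Vᴴ := by fun_prop
  have hWc : Continuous fun V : Matrix (Fin n) (Fin n) ℂ => (c • lblk hk) (V * L * Vᴴ) :=
    (c • lblk hk).continuous.comp cc
  have hδc : ∀ a, Continuous fun V : Matrix (Fin n) (Fin n) ℂ =>
      ((Real.sqrt (2 * n))⁻¹) • (c • lblk hk) (dcom a (V * L * Vᴴ)) := fun a =>
    Continuous.fun_const_smul (g := fun V => (c • lblk hk) (dcom a (V * L * Vᴴ)))
      ((c • lblk hk).continuous.comp ((dcomL a).continuous.comp cc)) _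
  obtain ⟨R, hR⟩ := unitary_bdd (fun V => ‖(c • lblk hk) (V * L * Vᴴ)‖ +
    ∑ a, ‖((Real.sqrt (2 * n))⁻¹) • (c • lblk hk) (dcom a (V * L * Vᴴ))‖)
    (hWc.norm.add (continuous_finsetSum _ fun a _ => (hδc a).norm))
  have h := smart_path P (fun ω => (c • lblk hk) (U ω * L * (U ω)ᴴ)) (hWc.measurable.comp hUmeas)
    (fun (a : Fin n × Fin n) ω => ((Real.sqrt (2 * n))⁻¹) • (c • lblk hk) (dcom a (U ω * L * (U ω)ᴴ)))
    (fun a => (hδc a).measurable.comp hUmeas) R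
    (fun ω => by
      refine le_trans ?_ ((le_abs_self _).trans (hR _ (hUmem ω)))
      exact le_add_of_nonneg_right (Finset.sum_nonneg fun a _ => norm_nonneg _))
    (fun a ω => by
      refine le_trans ?_ ((le_abs_self _).trans (hR _ (hUmem ω)))
      refine le_trans ?_ (le_add_of_nonneg_left (norm_nonneg _))
      exact Finset.single_le_sum (f := fun a => ‖((Real.sqrt (2 * n))⁻¹) • (c • lblk hk) (dcom a (U ω * L * (U ω)ᴴ))‖)
        (fun a _ => norm_nonneg _) (Finset.mem_univ a))
    (fun F hF => by
      have h1 := haar_stein P U hUmeas hUmem hUhaar L (by rw [hL, diagC_trace, hd]; simp) (c • lblk hk) F hF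
      have hsq : Real.sqrt (2 * n) ^ 2 = 2 * n := Real.sq_sqrt (by positivity)
      have e : ∀ u v : EK k, fderiv ℝ F u ((Real.sqrt (2 * n))⁻¹ • v) ((Real.sqrt (2 * n))⁻¹ • v) =
          (2 * n : ℝ)⁻¹ * fderiv ℝ F u v v := by
        intro u v
        rw [map_smul, map_smul, _root_.smul_apply, smul_eq_mul, smul_eq_mul]
        generalize Real.sqrt (2 * n) = r at hsq
        rw [← hsq]
        ring
      simp only [e, integral_const_mul]
      rw [← Finset.mul_sum, ← h1]
      field_simp)
    f hf
  refine h.trans ?_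
  have iD := conj_integrable P U hUmeas hUmem L' (fun M => ‖lblk hk M‖) (by fun_prop)
  have iB := conj_integrable P U hUmeas hUmem L (fun M => ‖lblk hk M‖ ^ 2) (by fun_prop)
  have iQ : Integrable (fun ω => 1 / (n:ℝ) ^ 2 + c ^ 2 / n * ‖lblk hk (U ω * L' * (U ω)ᴴ)‖
      + c ^ 2 / n * ‖lblk hk (U ω * L * (U ω)ᴴ)‖ ^ 2) P :=
    ((integrable_const _).add (iD.const_mul _)).add (iB.const_mul _)
  have iprod := Integrable.mul_prod iQ (gauss_integrable_norm (E := EK k))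
  have step := integral_mono_of_nonneg (μ := P.prod (stdGaussian (EK k)))
    (Filter.Eventually.of_forall fun p => norm_nonneg (p.2 - ∑ a : Fin n × Fin n, (inner ℝ (((Real.sqrt (2 * n))⁻¹) • (c • lblk hk) (dcom a (U p.1 * L * (U p.1)ᴴ))) p.2 : ℝ) •
      (((Real.sqrt (2 * n))⁻¹) • (c • lblk hk) (dcom a (U p.1 * L * (U p.1)ᴴ))))) iprod
    (Filter.Eventually.of_forall fun p => by
      have := point_bound hk hn d hs c hc (U p.1) (hUmem p.1) p.2
      exact this.trans_eq (mul_comm _ _))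
  refine step.trans ?_
  rw [integral_prod_mul (fun ω => 1 / (n:ℝ) ^ 2 + c ^ 2 / n * ‖lblk hk (U ω * L' * (U ω)ᴴ)‖
      + c ^ 2 / n * ‖lblk hk (U ω * L * (U ω)ᴴ)‖ ^ 2) (fun x : EK k => ‖x‖),
    integral_add (f := fun ω => 1 / (n:ℝ) ^ 2 + c ^ 2 / n * ‖lblk hk (U ω * L' * (U ω)ᴴ)‖)
      ((integrable_const _).add (iD.const_mul _)) (iB.const_mul _),
    integral_add (integrable_const _) (iD.const_mul _), integral_const_mul, integral_const_mul, mul_comm]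
  simp only [integral_const, probReal_univ, one_smul]
  refine mul_le_mul_of_nonneg_right gauss_norm_le ?_
  have : 0 ≤ ∫ ω, ‖lblk hk (U ω * L' * (U ω)ᴴ)‖ ∂P := integral_nonneg fun _ => norm_nonneg _
  have : 0 ≤ ∫ ω, ‖lblk hk (U ω * L * (U ω)ᴴ)‖ ^ 2 ∂P := integral_nonneg fun _ => by positivity
  positivity

end Asm


section Fin
open scoped Matrix.Norms.Frobenius

lemma op_entry {n : ℕ} (M : Matrix (Fin n) (Fin n) ℝ) (i : Fin n) : |M i i| ≤ opNormR M := by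
  have h := (Matrix.toEuclideanCLM (𝕜 := ℝ) M).le_opNorm (EuclideanSpace.single i (1:ℝ))
  rw [EuclideanSpace.norm_single, norm_one, mul_one] at h
  refine le_trans ?_ h
  have h2 := PiLp.norm_apply_le (Matrix.toEuclideanCLM (𝕜 := ℝ) M (EuclideanSpace.single i (1:ℝ))) i
  refine le_trans (le_of_eq ?_) h2
  rw [Real.norm_eq_abs]
  congr 1
  simp [Matrix.ofLp_toEuclideanCLM]

/-- the closing numerical estimate -/
lemma numeric {k n r : ℝ} (hk : 1 ≤ k) (hn : 1 ≤ n) (hr : 1 / Real.sqrt n ≤ r) (x : ℝ)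
    (h1 : x ≤ 2 * k) (h2 : x ≤ k / n ^ 2 + k ^ 2 * r + k ^ 3 / n) :
    x ≤ 18 * k ^ 2 * Real.sqrt n * r ^ 2 := by
  set s := Real.sqrt n with hs
  have hs1 : 1 ≤ s := Real.one_le_sqrt.2 hn
  have hn2 : n = s ^ 2 := (Real.sq_sqrt (by linarith)).symm
  have hs0 : 0 < s := by linarith
  have hsr : 1 ≤ s * r := by rw [div_le_iff₀ hs0] at hr; linarith
  have hr0 : 0 < r := by
    have : 0 < 1 / s := by positivity
    linarith
  have a1 : r ≤ s * r ^ 2 := by nlinarith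
  have a2 : 1 / s ≤ s * r ^ 2 := hr.trans a1
  set q := s * r ^ 2 with hq
  have hq0 : 0 < q := by positivity
  have goal : 18 * k ^ 2 * s * r ^ 2 = 18 * k ^ 2 * q := by rw [hq]; ring
  rw [goal]
  by_cases hc : k ≤ s
  · have b1 : k / n ^ 2 ≤ k ^ 2 * q := by
      have : k / n ^ 2 ≤ k ^ 2 * (1 / s) := by
        rw [hn2, div_le_iff₀ (by positivity)]
        have e : k ^ 2 * (1 / s) * (s ^ 2) ^ 2 = k ^ 2 * s ^ 3 := by field_simp
        rw [e]
        have := one_le_pow₀ (n := 3) hs1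
        nlinarith
      exact this.trans (by gcongr)
    have b2 : k ^ 3 / n ≤ k ^ 2 * q := by
      have : k ^ 3 / n ≤ k ^ 2 * (1 / s) := by
        rw [hn2, div_le_iff₀ (by positivity)]
        have e : k ^ 2 * (1 / s) * s ^ 2 = k ^ 2 * s := by field_simp
        rw [e]
        nlinarith [sq_nonneg k]
      exact this.trans (by gcongr)
    have b3 : k ^ 2 * r ≤ k ^ 2 * q := by gcongr
    have : 0 ≤ k ^ 2 * q := by positivity
    linarith
  · push Not at hc
    have : k ^ 2 * q ≥ k := by
      have h3 : k ^ 2 * (1 / s) ≤ k ^ 2 * q := by gcongr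
      have h4 : k ≤ k ^ 2 * (1 / s) := by
        rw [mul_one_div, le_div_iff₀ hs0]; nlinarith
      linarith
    linarith

variable {n k : ℕ} (hk : k ≤ n)
variable {Ω : Type*} [MeasurableSpace Ω] (P : Measure Ω) [IsProbabilityMeasure P]
  (U : Ω → Matrix (Fin n) (Fin n) ℂ)

lemma final_bound (hUmeas : Measurable U)
    (hUmem : ∀ ω, U ω ∈ Matrix.unitaryGroup (Fin n) ℂ)
    (hUhaar : ∀ V ∈ Matrix.unitaryGroup (Fin n) ℂ,
      Measure.map (fun ω => V * U ω) P = Measure.map U P)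
    (hk1 : 1 ≤ k) (d : Fin n → ℝ) (hd : ∑ i, d i = 0) (s op : ℝ) (hs : 0 < s)
    (hs2 : s ^ 2 = ∑ i, d i ^ 2) (hop : ∀ i, |d i| ≤ op) (f : EK k → ℝ) (hf : LipschitzWith 1 f) :
    |∫ ω, f ((Real.sqrt ((n:ℝ) ^ 2 - 1) / s) • lblk hk (U ω * (Matrix.diagonal fun i => (d i : ℂ)) * (U ω)ᴴ)) ∂P
      - ∫ x, f x ∂(stdGaussian (EK k))| ≤ 18 * k ^ 2 * Real.sqrt n * (op ^ 2 / s ^ 2) := by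
  have hn : 0 < n := by omega
  have hn1 : (1:ℝ) ≤ n := by exact_mod_cast hn
  have hn' : (0:ℝ) < n := by linarith
  have hk' : (1:ℝ) ≤ k := by exact_mod_cast hk1
  set c := Real.sqrt ((n:ℝ) ^ 2 - 1) / s with hc
  have hc0 : 0 ≤ c := by positivity
  have hc2 : c ^ 2 * s ^ 2 = n ^ 2 - 1 := by
    rw [hc, div_pow, Real.sq_sqrt (by nlinarith)]
    field_simp
  have hcs : c * s ≤ n := by
    refine abs_le_of_sq_le_sq' ?_ hn'.le |>.2
    rw [mul_pow, hc2]; linarith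
  have hop0 : 0 ≤ op := (abs_nonneg _).trans (hop ⟨0, hn⟩)
  have hdop : ∀ i, d i ^ 2 ≤ op ^ 2 := fun i => by
    rw [← sq_abs]; exact pow_le_pow_left₀ (abs_nonneg _) (hop i) 2
  have hsop : s ^ 2 ≤ n * op ^ 2 := by
    rw [hs2]
    calc ∑ i, d i ^ 2 ≤ ∑ i : Fin n, op ^ 2 := Finset.sum_le_sum fun i _ => hdop i
      _ = _ := by simp
  set L := (Matrix.diagonal fun i => (d i : ℂ)) with hL
  set L' := (Matrix.diagonal fun i => ((d i ^ 2 - (∑ i, d i ^ 2) / n : ℝ) : ℂ)) with hL'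
  have iB1 := conj_integrable P U hUmeas hUmem L (fun M => ‖lblk hk M‖) (by fun_prop)
  have iB := conj_integrable P U hUmeas hUmem L (fun M => ‖lblk hk M‖ ^ 2) (by fun_prop)
  have iD1 := conj_integrable P U hUmeas hUmem L' (fun M => ‖lblk hk M‖) (by fun_prop)
  have iD := conj_integrable P U hUmeas hUmem L' (fun M => ‖lblk hk M‖ ^ 2) (by fun_prop)
  have mB := mom3 hk P U hUmeas hUmem hUhaar hn d hd
  rw [← hL, ← hs2] at mB
  have mD := mom3 hk P U hUmeas hUmem hUhaar hn _ (split_sum hn d)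
  rw [← hL'] at mD
  have hd4 : ∑ i, (d i ^ 2 - (∑ i, d i ^ 2) / n) ^ 2 ≤ op ^ 2 * s ^ 2 := by
    have e : ∀ i, (d i ^ 2 - s ^ 2 / n) ^ 2 = d i ^ 2 * d i ^ 2 - 2 * (s ^ 2 / n) * d i ^ 2 + (s ^ 2 / n) ^ 2 := by
      intro i; ring
    rw [← hs2]
    simp only [e, Finset.sum_add_distrib, Finset.sum_sub_distrib, ← Finset.mul_sum, ← hs2]
    have h4 : ∑ i, d i ^ 2 * d i ^ 2 ≤ op ^ 2 * s ^ 2 := by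
      rw [hs2, Finset.mul_sum]
      exact Finset.sum_le_sum fun i _ => mul_le_mul_of_nonneg_right (hdop i) (sq_nonneg _)
    simp only [Finset.sum_const, Finset.card_univ, Fintype.card_fin, nsmul_eq_mul]
    have e2 : (n:ℝ) * (s ^ 2 / n) ^ 2 = (s ^ 2 / n) * s ^ 2 := by field_simp
    rw [e2]
    have : 0 ≤ (s ^ 2 / n) * s ^ 2 := by positivity
    nlinarith
  have EB : ∫ ω, ‖lblk hk (U ω * L * (U ω)ᴴ)‖ ∂P ≤ k * s / n := by
    refine abs_le_of_sq_le_sq' ?_ (by positivity) |>.2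
    refine (sq_int_le P _ iB1 iB).trans (mB.trans (le_of_eq ?_))
    ring
  have ED : ∫ ω, ‖lblk hk (U ω * L' * (U ω)ᴴ)‖ ∂P ≤ k * (op * s) / n := by
    refine abs_le_of_sq_le_sq' ?_ (by positivity) |>.2
    refine (sq_int_le P _ iD1 iD).trans (mD.trans ?_)
    rw [div_pow, mul_pow, mul_pow]
    gcongr
  have hw := w1_bound hk P U hUmeas hUmem hUhaar hn d hd (by rw [← hs2]; positivity) c (by rw [← hs2, hc2]) f hf
  rw [← hL, ← hL'] at hw
  rw [← div_pow]
  have hfb : ∀ x, |f x - f 0| ≤ ‖x‖ := by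
    intro x
    have := hf.dist_le_mul x 0
    simpa [Real.dist_eq, dist_zero_right] using this
  refine numeric hk' hn1 ?_ _ ?_ ?_
  · rw [div_le_div_iff₀ (by positivity) hs, one_mul]
    refine abs_le_of_sq_le_sq' ?_ (by positivity) |>.2
    rw [mul_pow, Real.sq_sqrt hn'.le]; linarith
  · have cf : Continuous fun M => f (c • lblk hk M) := hf.continuous.comp (by fun_prop)
    have i1 := conj_integrable P U hUmeas hUmem L (fun M => f (c • lblk hk M)) cf
    have i2 : Integrable f (stdGaussian (EK k)) := by
      refine ((gauss_integrable_norm (E := EK k)).add (integrable_const |f 0|)).mono hf.continuous.aestronglyMeasurable ?_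
      refine Filter.Eventually.of_forall fun x => ?_
      have h1 := hfb x
      have h2 := abs_sub_abs_le_abs_sub (f x) (f 0)
      simp only [Pi.add_apply, Real.norm_eq_abs]
      rw [abs_of_nonneg (a := ‖x‖ + |f 0|) (by positivity)]
      linarith
    have d1 : |∫ ω, f (c • lblk hk (U ω * L * (U ω)ᴴ)) ∂P - f 0| ≤ k := by
      have e : ∫ ω, f (c • lblk hk (U ω * L * (U ω)ᴴ)) ∂P - f 0 = ∫ ω, (f (c • lblk hk (U ω * L * (U ω)ᴴ)) - f 0) ∂P := by
        rw [integral_sub i1 (integrable_const _)]; simp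
      rw [e]
      refine (abs_integral_le_integral_abs).trans ?_
      have : ∫ ω, |f (c • lblk hk (U ω * L * (U ω)ᴴ)) - f 0| ∂P ≤ ∫ ω, c * ‖lblk hk (U ω * L * (U ω)ᴴ)‖ ∂P := by
        refine integral_mono (i1.sub (integrable_const _)).abs (iB1.const_mul _) fun ω => ?_
        refine (hfb _).trans ?_
        rw [norm_smul, Real.norm_of_nonneg hc0]
      refine this.trans ?_
      rw [integral_const_mul]
      refine (mul_le_mul_of_nonneg_left EB hc0).trans ?_
      rw [mul_div_assoc', div_le_iff₀ hn']
      nlinarith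
    have d2 : |∫ x, f x ∂(stdGaussian (EK k)) - f 0| ≤ k := by
      have e : ∫ x, f x ∂(stdGaussian (EK k)) - f 0 = ∫ x, (f x - f 0) ∂(stdGaussian (EK k)) := by
        rw [integral_sub i2 (integrable_const _)]; simp
      rw [e]
      refine (abs_integral_le_integral_abs).trans (le_trans ?_ gauss_norm_le)
      exact integral_mono (i2.sub (integrable_const _)).abs gauss_integrable_norm hfb
    rw [abs_le] at d1 d2 ⊢
    constructor <;> linarith [d1.1, d1.2, d2.1, d2.2]
  · refine hw.trans ?_
    have hc3 : c ^ 2 / n ≤ n / s ^ 2 := by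
      rw [div_le_div_iff₀ hn' (by positivity), hc2]; nlinarith
    have t1 : c ^ 2 / n * ∫ ω, ‖lblk hk (U ω * L' * (U ω)ᴴ)‖ ∂P ≤ n / s ^ 2 * (k * (op * s) / n) := by
      gcongr
    have t2 : c ^ 2 / n * ∫ ω, ‖lblk hk (U ω * L * (U ω)ᴴ)‖ ^ 2 ∂P ≤ n / s ^ 2 * (k ^ 2 * s ^ 2 / n ^ 2) := by
      gcongr
    calc _ ≤ (k:ℝ) * (1 / n ^ 2 + n / s ^ 2 * (k * (op * s) / n) + n / s ^ 2 * (k ^ 2 * s ^ 2 / n ^ 2)) := by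
          gcongr
      _ = _ := by field_simp

end Fin

theorem stmt8 {n k : ℕ} (hk : k ≤ n)
    (Λ : Matrix (Fin n) (Fin n) ℝ) (hdiag : Λ.IsDiag) (hΛne : Λ ≠ 0)
    (hΛtr : Λ.trace = 0)
    {Ω : Type*} [MeasurableSpace Ω] (P : Measure Ω) [IsProbabilityMeasure P]
    -- U is Haar distributed on the unitary group:
    (U : Ω → Matrix (Fin n) (Fin n) ℂ) (hUmeas : Measurable U)
    (hUmem : ∀ ω, U ω ∈ Matrix.unitaryGroup (Fin n) ℂ)
    (hUhaar : ∀ V ∈ Matrix.unitaryGroup (Fin n) ℂ,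
      Measure.map (fun ω => V * U ω) P = Measure.map U P)
    -- G is a k × k GUE matrix with distribution γ:
    (γ : Measure (Matrix (Fin k) (Fin k) ℂ)) (hγ : IsGUE γ)
    -- W₁ bound, in dual (1-Lipschitz w.r.t. Hilbert–Schmidt norm) form:
    (f : Matrix (Fin k) (Fin k) ℂ → ℝ)
    (hf : ∀ M₁ M₂ : Matrix (Fin k) (Fin k) ℂ, |f M₁ - f M₂| ≤ hsNormC (M₁ - M₂)) :
    |(∫ ω, f ((Real.sqrt ((n : ℝ) ^ 2 - 1) / hsNormR Λ) •
          ((U ω * Λ.map (fun x => (x : ℂ)) * (U ω)ᴴ).submatrix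
            (Fin.castLE hk) (Fin.castLE hk))) ∂P) -
        ∫ M, f M ∂γ| ≤
      18 * k ^ 2 * Real.sqrt n * ((opNormR Λ) ^ 2 / (hsNormR Λ) ^ 2) := by
  letI : NormedAddCommGroup (Matrix (Fin k) (Fin k) ℂ) := Matrix.frobeniusNormedAddCommGroup
  have hfL : LipschitzWith 1 f := LipschitzWith.of_dist_le_mul fun M N => by
    rw [Real.dist_eq, dist_eq_norm, NNReal.coe_one, one_mul, ← hsC_eq]
    exact hf M N
  have hfc : Continuous f := hfL.continuous
  have hfh : LipschitzWith 1 (fun x : EK k => f (herm x)) := LipschitzWith.of_dist_le_mul fun x y => by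
    rw [Real.dist_eq, dist_eq_norm, NNReal.coe_one, one_mul, ← norm_herm, map_sub, ← hsC_eq]
    exact hf _ _
  have hΛ : Λ = Matrix.diagonal fun i => Λ i i := (hdiag.diagonal_diag).symm
  have hΛc : Λ.map (fun x => (x : ℂ)) = Matrix.diagonal fun i => ((Λ i i : ℝ) : ℂ) := by
    ext i j
    by_cases h : i = j
    · subst h; simp
    · simp [h, hdiag h]
  have htr : (Λ * Λᵀ).trace = ∑ i, Λ i i ^ 2 := by
    simp only [Matrix.trace, Matrix.diag, Matrix.mul_apply, Matrix.transpose_apply]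
    refine Finset.sum_congr rfl fun i _ => ?_
    rw [Finset.sum_eq_single i]
    · ring
    · intro j _ hj; rw [hdiag hj.symm]; simp
    · simp
  have hs2 : hsNormR Λ ^ 2 = ∑ i, Λ i i ^ 2 := by
    rw [hsNormR, htr, Real.sq_sqrt (by positivity)]
  have hspos : 0 < ∑ i, Λ i i ^ 2 := by
    by_contra hcon
    have h0 : ∑ i, Λ i i ^ 2 = 0 := le_antisymm (not_lt.1 hcon) (by positivity)
    rw [Finset.sum_eq_zero_iff_of_nonneg (fun i _ => sq_nonneg _)] at h0
    apply hΛne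
    rw [hΛ]
    ext i j
    by_cases h : i = j
    · subst h; simpa using h0 i (Finset.mem_univ i)
    · simp [h]
  have hs : 0 < hsNormR Λ := by
    rw [hsNormR, htr]; exact Real.sqrt_pos.2 hspos
  rcases Nat.eq_zero_or_pos k with hk0 | hkpos
  · subst hk0
    have e : ∀ M : Matrix (Fin 0) (Fin 0) ℂ, f M = f 0 := fun M => congrArg f (Subsingleton.elim _ _)
    have := hγ.1
    have e1 : (∫ ω, f ((Real.sqrt ((n : ℝ) ^ 2 - 1) / hsNormR Λ) •
          ((U ω * Λ.map (fun x => (x : ℂ)) * (U ω)ᴴ).submatrix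
            (Fin.castLE hk) (Fin.castLE hk))) ∂P) = f 0 := by
      rw [integral_congr_ae (Filter.Eventually.of_forall fun ω => e _)]; simp
    have e2 : ∫ M, f M ∂γ = f 0 := by
      rw [integral_congr_ae (Filter.Eventually.of_forall fun M => e M)]; simp
    rw [e1, e2]
    simp
  rw [gue_integral γ hγ f hfc]
  have key := final_bound hk P U hUmeas hUmem hUhaar hkpos (fun i => Λ i i) hΛtr (hsNormR Λ) (opNormR Λ) hs hs2
    (op_entry Λ) _ hfh
  refine le_trans (le_of_eq ?_) key
  congr 2
  refine integral_congr_ae (Filter.Eventually.of_forall fun ω => ?_)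
  simp only
  rw [map_smul, lblk_apply, herm_vec _ (blk_herm hk _ (conj_herm _ _ (diagC_herm _))), hΛc]
  rfl
end

section
/- Let Z be uniformly distributed on the unit sphere of ℂⁿ, and let B and C be traceless n×n complex Hermitian matrices. Then E[ ⟨B Z, Z⟩ ] = 0 and E[ ⟨B Z, Z⟩ · ⟨C Z, Z⟩ ] = tr(BC) / (n(n+1)), where ⟨Bz, z⟩ denotes the (real-valued) quadratic form of the Hermitian matrix B evaluated at z. -/
open MeasureTheory ProbabilityTheory Matrix
open scoped Matrix

section helpers
variable {n : ℕ} {Ω : Type*} [MeasurableSpace Ω] 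

/-- Continuous functions of a vector on the sphere are integrable. -/
theorem aux_int (P : Measure Ω) [IsProbabilityMeasure P]
    (Z : Ω → Fin n → ℂ) (hZmeas : Measurable Z)
    (hZsph : ∀ ω, ∑ j, Complex.normSq (Z ω j) = 1)
    (f : (Fin n → ℂ) → ℝ) (hf : Continuous f) : Integrable (fun ω => f (Z ω)) P := by
  have hb : ∀ ω, Z ω ∈ Metric.closedBall (0 : Fin n → ℂ) 1 := by
    intro ω
    rw [mem_closedBall_zero_iff, pi_norm_le_iff_of_nonneg zero_le_one]
    intro i
    have h1 : Complex.normSq (Z ω i) ≤ 1 := by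
      rw [← hZsph ω]
      exact Finset.single_le_sum (f := fun j => Complex.normSq (Z ω j))
        (fun j _ => Complex.normSq_nonneg _) (Finset.mem_univ i)
    rw [Complex.normSq_eq_norm_sq] at h1
    nlinarith [norm_nonneg (Z ω i)]
  obtain ⟨M, hM⟩ := (isCompact_closedBall (0 : Fin n → ℂ) 1).exists_bound_of_continuousOn
    hf.continuousOn
  exact Integrable.of_bound (hf.measurable.comp hZmeas).aestronglyMeasurable M
    (Filter.Eventually.of_forall fun ω => hM _ (hb ω))

theorem aux_inv (P : Measure Ω) [IsProbabilityMeasure P]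
    (Z : Ω → Fin n → ℂ) (hZmeas : Measurable Z)
    (hZunif : ∀ V ∈ Matrix.unitaryGroup (Fin n) ℂ,
      Measure.map (fun ω => Matrix.mulVec V (Z ω)) P = Measure.map Z P)
    (V : Matrix (Fin n) (Fin n) ℂ) (hV : V ∈ Matrix.unitaryGroup (Fin n) ℂ)
    (f : (Fin n → ℂ) → ℝ) (hf : Continuous f) :
    ∫ ω, f (V.mulVec (Z ω)) ∂P = ∫ ω, f (Z ω) ∂P := by
  have hc : Continuous (fun z : Fin n → ℂ => V.mulVec z) := by fun_prop
  rw [← integral_map (φ := fun ω => V.mulVec (Z ω)) (f := f)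
    (hc.measurable.comp hZmeas).aemeasurable hf.aestronglyMeasurable, hZunif V hV,
    integral_map hZmeas.aemeasurable hf.aestronglyMeasurable]

theorem aux_phase_mem (u : Fin n → ℂ) (hu : ∀ i, star (u i) * u i = 1) :
    Matrix.diagonal u ∈ Matrix.unitaryGroup (Fin n) ℂ := by
  rw [Matrix.mem_unitaryGroup_iff', Matrix.star_eq_conjTranspose, Matrix.diagonal_conjTranspose,
    Matrix.diagonal_mul_diagonal]
  simp only [Pi.star_apply, hu]
  exact Matrix.diagonal_one

theorem aux_perm_mem (σ : Equiv.Perm (Fin n)) :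
    (σ.permMatrix ℂ) ∈ Matrix.unitaryGroup (Fin n) ℂ := by
  rw [Matrix.mem_unitaryGroup_iff', Matrix.star_eq_conjTranspose, Matrix.conjTranspose_permMatrix,
    ← Matrix.permMatrix_mul]
  simp

/-- A reflection mixing two coordinates. -/
theorem aux_rot {i j : Fin n} (hij : i ≠ j) :
    ∃ V ∈ Matrix.unitaryGroup (Fin n) ℂ, ∀ z : Fin n → ℂ,
      V.mulVec z i = (7 / 25 : ℝ) * z i + (-24 / 25 : ℝ) * z j := by
  let w : Fin n → ℂ := Pi.single i 3 + Pi.single j 4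
  have hw : star w = w := by
    ext k
    simp only [w, Pi.star_apply, Pi.add_apply, Pi.single_apply]
    split_ifs <;> simp
  have hww : w ⬝ᵥ w = 25 := by
    simp [w, hij, hij.symm]; norm_num
  refine ⟨1 - (2 / 25 : ℂ) • Matrix.vecMulVec w w, ?_, ?_⟩
  · rw [Matrix.mem_unitaryGroup_iff', Matrix.star_eq_conjTranspose]
    have h : (1 - (2 / 25 : ℂ) • Matrix.vecMulVec w w)ᴴ = 1 - (2 / 25 : ℂ) • Matrix.vecMulVec w w := by
      rw [Matrix.conjTranspose_sub, Matrix.conjTranspose_smul, Matrix.conjTranspose_vecMulVec, hw]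
      simp
    rw [h, sub_mul, mul_sub, mul_sub, smul_mul_smul_comm, Matrix.vecMulVec_mul_vecMulVec, hww]
    ext a b
    simp [Matrix.vecMulVec_apply]
    ring
  · intro z
    rw [Matrix.sub_mulVec, Matrix.smul_mulVec, Matrix.vecMulVec_mulVec]
    simp [w, hij, add_dotProduct]
    ring


/-- Abstract form: integrability and invariance packaged. -/
theorem aux_moments (P : Measure Ω) [IsProbabilityMeasure P]
    (Z : Ω → Fin n → ℂ)
    (hZsph : ∀ ω, ∑ j, Complex.normSq (Z ω j) = 1)
    (hint : ∀ f : (Fin n → ℂ) → ℝ, Continuous f → Integrable (fun ω => f (Z ω)) P)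
    (hinv : ∀ V ∈ Matrix.unitaryGroup (Fin n) ℂ, ∀ f : (Fin n → ℂ) → ℝ, Continuous f →
      ∫ ω, f (V.mulVec (Z ω)) ∂P = ∫ ω, f (Z ω) ∂P) :
    (∀ i, ∫ ω, Complex.normSq (Z ω i) ∂P = 1 / n) ∧
    (∀ i, ∫ ω, Complex.normSq (Z ω i) * Complex.normSq (Z ω i) ∂P = 2 / (n * (n + 1))) ∧
    (∀ i j, i ≠ j → ∫ ω, Complex.normSq (Z ω i) * Complex.normSq (Z ω j) ∂P = 1 / (n * (n + 1))) := by
  have cns : Continuous Complex.normSq := Complex.continuous_normSq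
  have hperm : ∀ i j : Fin n, ∀ g : ℂ → ℝ, Continuous g →
      ∫ ω, g (Z ω i) ∂P = ∫ ω, g (Z ω j) ∂P := by
    intro i j g hg
    have h := hinv _ (aux_perm_mem (Equiv.swap i j)) (fun z => g (z j)) (by fun_prop)
    simpa [Matrix.permMatrix_mulVec] using h
  have hm : ∀ i, ∫ ω, Complex.normSq (Z ω i) ∂P = 1 / n := by
    intro i
    have h1 : ∑ j, ∫ ω, Complex.normSq (Z ω j) ∂P = 1 := by
      rw [← integral_finsetSum _ (fun j _ => hint (fun z => Complex.normSq (z j)) (by fun_prop))]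
      simp [hZsph]
    rw [Finset.sum_congr rfl (fun j _ => hperm j i _ cns)] at h1
    simp only [Finset.sum_const, Finset.card_univ, Fintype.card_fin, nsmul_eq_mul] at h1
    have hn : (n : ℝ) ≠ 0 := by rintro h; simp [h] at h1
    field_simp
    linarith
  have hab : ∀ i j, i ≠ j → ∫ ω, Complex.normSq (Z ω i) * Complex.normSq (Z ω j) ∂P
      = (∫ ω, Complex.normSq (Z ω i) * Complex.normSq (Z ω i) ∂P) / 2 := by
    intro i j hij
    obtain ⟨V, hV, hVz⟩ := aux_rot hij
    set a := ∫ ω, Complex.normSq (Z ω i) * Complex.normSq (Z ω i) ∂P with ha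
    have haj : ∫ ω, Complex.normSq (Z ω j) * Complex.normSq (Z ω j) ∂P = a :=
      hperm j i (fun z => Complex.normSq z * Complex.normSq z) (by fun_prop)
    let g : (Fin n → ℂ) → ℝ := fun z =>
      Complex.normSq ((7 / 25 : ℝ) * z i + (-24 / 25 : ℝ) * z j) * Complex.normSq ((7 / 25 : ℝ) * z i + (-24 / 25 : ℝ) * z j)
    have hg : Continuous g := by fun_prop
    have hga : ∫ ω, g (Z ω) ∂P = a := by
      rw [ha, ← hinv V hV (fun z => Complex.normSq (z i) * Complex.normSq (z i)) (by fun_prop)]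
      simp only [hVz, g]
    have hph : ∀ c : ℂ, star c * c = 1 →
        ∫ ω, Complex.normSq ((7 / 25 : ℝ) * (c * Z ω i) + (-24 / 25 : ℝ) * Z ω j) *
          Complex.normSq ((7 / 25 : ℝ) * (c * Z ω i) + (-24 / 25 : ℝ) * Z ω j) ∂P = a := by
      intro c hc
      have hu : ∀ k, star ((Function.update (1 : Fin n → ℂ) i c) k) *
          (Function.update (1 : Fin n → ℂ) i c) k = 1 := by
        intro k
        by_cases hk : k = i
        · subst hk; simpa using hc
        · simp [hk]
      rw [← hga, ← hinv _ (aux_phase_mem _ hu) g hg]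
      simp [g, Matrix.mulVec_diagonal, hij.symm]
    have h1 := hph 1 (by simp)
    have h2 := hph (-1) (by simp)
    have h3 := hph Complex.I (by simp)
    have h4 := hph (-Complex.I) (by simp)
    have hI : ∀ c : ℂ, Integrable (fun ω => Complex.normSq ((7 / 25 : ℝ) * (c * Z ω i) + (-24 / 25 : ℝ) * Z ω j) *
          Complex.normSq ((7 / 25 : ℝ) * (c * Z ω i) + (-24 / 25 : ℝ) * Z ω j)) P := fun c =>
      hint (fun z => Complex.normSq ((7 / 25 : ℝ) * (c * z i) + (-24 / 25 : ℝ) * z j) *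
          Complex.normSq ((7 / 25 : ℝ) * (c * z i) + (-24 / 25 : ℝ) * z j)) (by fun_prop)
    have hJ : ∀ k l : Fin n, Integrable (fun ω => Complex.normSq (Z ω k) * Complex.normSq (Z ω l)) P := fun k l =>
      hint (fun z => Complex.normSq (z k) * Complex.normSq (z l)) (by fun_prop)
    have key : ∀ ω, ((Complex.normSq ((7 / 25 : ℝ) * (1 * Z ω i) + (-24 / 25 : ℝ) * Z ω j) *
          Complex.normSq ((7 / 25 : ℝ) * (1 * Z ω i) + (-24 / 25 : ℝ) * Z ω j)
        + Complex.normSq ((7 / 25 : ℝ) * (-1 * Z ω i) + (-24 / 25 : ℝ) * Z ω j) *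
          Complex.normSq ((7 / 25 : ℝ) * (-1 * Z ω i) + (-24 / 25 : ℝ) * Z ω j))
        + Complex.normSq ((7 / 25 : ℝ) * (Complex.I * Z ω i) + (-24 / 25 : ℝ) * Z ω j) *
          Complex.normSq ((7 / 25 : ℝ) * (Complex.I * Z ω i) + (-24 / 25 : ℝ) * Z ω j))
        + Complex.normSq ((7 / 25 : ℝ) * (-Complex.I * Z ω i) + (-24 / 25 : ℝ) * Z ω j) *
          Complex.normSq ((7 / 25 : ℝ) * (-Complex.I * Z ω i) + (-24 / 25 : ℝ) * Z ω j)
        = (4 * (7 / 25) ^ 4 * (Complex.normSq (Z ω i) * Complex.normSq (Z ω i))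
        + 4 * (24 / 25) ^ 4 * (Complex.normSq (Z ω j) * Complex.normSq (Z ω j)))
        + 16 * (7 / 25) ^ 2 * (24 / 25) ^ 2 * (Complex.normSq (Z ω i) * Complex.normSq (Z ω j)) := by
      intro ω
      simp only [Complex.normSq_apply, Complex.add_re, Complex.add_im, Complex.mul_re,
        Complex.mul_im, Complex.ofReal_re, Complex.ofReal_im, Complex.I_re, Complex.I_im,
        Complex.neg_re, Complex.neg_im, Complex.one_re, Complex.one_im]
      ring
    have hk := integral_congr_ae (μ := P) (Filter.Eventually.of_forall key)
    rw [integral_add (((hI _).fun_add (hI _)).fun_add (hI _)) (hI _),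
      integral_add ((hI _).fun_add (hI _)) (hI _), integral_add (hI _) (hI _), h1, h2, h3, h4,
      integral_add (((hJ _ _).const_mul _).fun_add ((hJ _ _).const_mul _)) ((hJ _ _).const_mul _),
      integral_add ((hJ _ _).const_mul _) ((hJ _ _).const_mul _),
      integral_const_mul, integral_const_mul, integral_const_mul, haj, ← ha] at hk
    linarith
  have ha : ∀ i, ∫ ω, Complex.normSq (Z ω i) * Complex.normSq (Z ω i) ∂P = 2 / (n * (n + 1)) := by
    intro i
    have h1 : ∑ j, ∫ ω, Complex.normSq (Z ω i) * Complex.normSq (Z ω j) ∂P = 1 / n := by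
      rw [← integral_finsetSum _ (fun j _ => hint (fun z => Complex.normSq (z i) * Complex.normSq (z j)) (by fun_prop))]
      simp [← Finset.mul_sum, hZsph, hm]
    have h2 : ∀ j, ∫ ω, Complex.normSq (Z ω i) * Complex.normSq (Z ω j) ∂P =
        (∫ ω, Complex.normSq (Z ω i) * Complex.normSq (Z ω i) ∂P) / 2 +
        if j = i then (∫ ω, Complex.normSq (Z ω i) * Complex.normSq (Z ω i) ∂P) / 2 else 0 := by
      intro j
      split_ifs with h
      · subst h; ring
      · rw [hab i j (Ne.symm h)]; ring
    rw [Finset.sum_congr rfl (fun j _ => h2 j), Finset.sum_add_distrib] at h1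
    simp only [Finset.sum_const, Finset.card_univ, Fintype.card_fin, nsmul_eq_mul,
      Finset.sum_ite_eq', Finset.mem_univ, if_true] at h1
    have hn : (0 : ℝ) < n := by exact_mod_cast i.pos
    field_simp at h1 ⊢
    linarith
  refine ⟨hm, ha, fun i j hij => ?_⟩
  rw [hab i j hij, ha]
  ring

theorem aux_offdiag (P : Measure Ω)
    (Z : Ω → Fin n → ℂ)
    (hinv : ∀ V ∈ Matrix.unitaryGroup (Fin n) ℂ, ∀ f : (Fin n → ℂ) → ℝ, Continuous f →
      ∫ ω, f (V.mulVec (Z ω)) ∂P = ∫ ω, f (Z ω) ∂P)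
    (i k l : Fin n) (hkl : k ≠ l) (c : ℂ) :
    ∫ ω, Complex.normSq (Z ω i) * (star (Z ω k) * (c * Z ω l)).re ∂P = 0 := by
  have hu : ∀ m, star ((Function.update (1 : Fin n → ℂ) k (-1)) m) *
      (Function.update (1 : Fin n → ℂ) k (-1)) m = 1 := by
    intro m
    by_cases hk : m = k
    · subst hk; simp
    · simp [hk]
  have h := hinv _ (aux_phase_mem _ hu) (fun z => Complex.normSq (z i) * (star (z k) * (c * z l)).re)
    (by have := Complex.continuous_normSq; fun_prop)
  have h2 : ∀ ω, Complex.normSq ((Function.update (1 : Fin n → ℂ) k (-1)) i * Z ω i) = Complex.normSq (Z ω i) := by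
    intro ω
    by_cases hk : i = k
    · subst hk; simp
    · simp [hk]
  simp only [Matrix.mulVec_diagonal, h2, Function.update_self, Function.update_of_ne hkl.symm,
    Pi.one_apply, one_mul, neg_mul, star_neg, Complex.neg_re, mul_neg, integral_neg] at h
  linarith

theorem aux_diag (P : Measure Ω) [IsProbabilityMeasure P]
    (Z : Ω → Fin n → ℂ)
    (hZsph : ∀ ω, ∑ j, Complex.normSq (Z ω j) = 1)
    (hint : ∀ f : (Fin n → ℂ) → ℝ, Continuous f → Integrable (fun ω => f (Z ω)) P)
    (hinv : ∀ V ∈ Matrix.unitaryGroup (Fin n) ℂ, ∀ f : (Fin n → ℂ) → ℝ, Continuous f →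
      ∫ ω, f (V.mulVec (Z ω)) ∂P = ∫ ω, f (Z ω) ∂P)
    (d : Fin n → ℝ) (hd : ∑ i, d i = 0) (C : Matrix (Fin n) (Fin n) ℂ) :
    (∫ ω, ∑ i, d i * Complex.normSq (Z ω i) ∂P = 0) ∧
    (∫ ω, (∑ i, d i * Complex.normSq (Z ω i)) * (star (Z ω) ⬝ᵥ C.mulVec (Z ω)).re ∂P
      = (∑ i, d i * (C i i).re) / (n * (n + 1))) := by
  obtain ⟨hm, ha, hb⟩ := aux_moments P Z hZsph hint hinv
  have cns : Continuous Complex.normSq := Complex.continuous_normSq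
  constructor
  · rw [integral_finsetSum _ (fun i _ => hint (fun z => d i * Complex.normSq (z i)) (by fun_prop))]
    simp only [integral_const_mul, hm, ← Finset.sum_mul, hd, zero_mul]
  · have h1 : ∀ ω, (∑ i, d i * Complex.normSq (Z ω i)) * (star (Z ω) ⬝ᵥ C.mulVec (Z ω)).re
        = ∑ i, ∑ k, ∑ l, d i * (Complex.normSq (Z ω i) * (star (Z ω k) * (C k l * Z ω l)).re) := by
      intro ω
      simp only [dotProduct, Matrix.mulVec, Complex.re_sum, Finset.mul_sum, Finset.sum_mul,
        Pi.star_apply]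
      rw [Finset.sum_congr rfl fun k _ => Finset.sum_comm, Finset.sum_comm]
      refine Finset.sum_congr rfl fun i _ => Finset.sum_congr rfl fun k _ =>
        Finset.sum_congr rfl fun l _ => ?_
      ring
    have hI : ∀ i k l, Integrable
        (fun ω => d i * (Complex.normSq (Z ω i) * (star (Z ω k) * (C k l * Z ω l)).re)) P := fun i k l =>
      hint (fun z => d i * (Complex.normSq (z i) * (star (z k) * (C k l * z l)).re)) (by fun_prop)
    have hik : ∀ i k, ∑ l, ∫ ω, d i * (Complex.normSq (Z ω i) * (star (Z ω k) * (C k l * Z ω l)).re) ∂P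
        = d i * ((C k k).re / (n * (n + 1))) + if k = i then d i * ((C k k).re / (n * (n + 1))) else 0 := by
      intro i k
      rw [Finset.sum_eq_single k]
      · have h2 : ∀ ω, d i * (Complex.normSq (Z ω i) * (star (Z ω k) * (C k k * Z ω k)).re) =
            (d i * (C k k).re) * (Complex.normSq (Z ω i) * Complex.normSq (Z ω k)) := by
          intro ω
          simp [Complex.normSq_apply]
          ring
        simp only [h2, integral_const_mul]
        split_ifs with h
        · subst h; rw [ha]; ring
        · rw [hb i k (Ne.symm h)]; ring
      · intro l _ hl
        rw [integral_const_mul, aux_offdiag P Z hinv i k l hl.symm, mul_zero]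
      · simp
    simp only [h1]
    rw [integral_finsetSum _ fun i _ => integrable_finsetSum _ fun k _ =>
      integrable_finsetSum _ fun l _ => hI i k l]
    have h3 : ∀ i, ∫ ω, ∑ k, ∑ l, d i * (Complex.normSq (Z ω i) * (star (Z ω k) * (C k l * Z ω l)).re) ∂P
        = d i * (∑ k, (C k k).re / (n * (n + 1))) + d i * ((C i i).re / (n * (n + 1))) := by
      intro i
      rw [integral_finsetSum _ fun k _ => integrable_finsetSum _ fun l _ => hI i k l]
      simp only [integral_finsetSum _ fun l _ => hI i _ l, hik, Finset.sum_add_distrib,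
        Finset.mul_sum]
      simp
    simp only [h3, Finset.sum_add_distrib, ← Finset.sum_mul, hd, zero_mul, zero_add]
    rw [Finset.sum_div]
    exact Finset.sum_congr rfl fun i _ => by ring

end helpers


theorem stmt19 {n : ℕ}
    {Ω : Type*} [MeasurableSpace Ω] (P : Measure Ω) [IsProbabilityMeasure P]
    (Z : Ω → Fin n → ℂ) (hZmeas : Measurable Z)
    -- Z takes values in the unit sphere of ℂⁿ:
    (hZsph : ∀ ω, ∑ j, Complex.normSq (Z ω j) = 1)
    -- the law of Z is invariant under the unitary group (uniform on the sphere):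
    (hZunif : ∀ V ∈ Matrix.unitaryGroup (Fin n) ℂ,
      Measure.map (fun ω => Matrix.mulVec V (Z ω)) P = Measure.map Z P)
    (B C : Matrix (Fin n) (Fin n) ℂ)
    (hB : B.IsHermitian) (hBtr : B.trace = 0)
    (hC : C.IsHermitian) (hCtr : C.trace = 0) :
    (∫ ω, (star (Z ω) ⬝ᵥ B.mulVec (Z ω)).re ∂P) = 0 ∧
    (∫ ω, (star (Z ω) ⬝ᵥ B.mulVec (Z ω)).re *
        (star (Z ω) ⬝ᵥ C.mulVec (Z ω)).re ∂P) =
      ((B * C).trace).re / ((n : ℝ) * ((n : ℝ) + 1)) := by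
  have hint := aux_int P Z hZmeas hZsph
  have hinv := aux_inv P Z hZmeas hZunif
  set U : Matrix (Fin n) (Fin n) ℂ := (hB.eigenvectorUnitary : Matrix (Fin n) (Fin n) ℂ) with hUdef
  have hU : U ∈ Matrix.unitaryGroup (Fin n) ℂ := hB.eigenvectorUnitary.2
  have hUU : Uᴴ * U = 1 := Matrix.mem_unitaryGroup_iff'.1 hU
  set d := hB.eigenvalues with hd
  have hspec : B = U * Matrix.diagonal (fun i => (d i : ℂ)) * Uᴴ := by
    have h := hB.spectral_theorem
    rw [Unitary.conjStarAlgAut_apply] at h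
    exact h
  have hsum : ∑ i, d i = 0 := by
    have h := hB.trace_eq_sum_eigenvalues
    rw [hBtr] at h
    have hcast : ((∑ i, d i : ℝ) : ℂ) = 0 := by
      rw [Complex.ofReal_sum]
      exact h.symm
    exact Complex.ofReal_eq_zero.1 hcast
  have hquad : ∀ (A : Matrix (Fin n) (Fin n) ℂ) (z : Fin n → ℂ),
      star (U.mulVec z) ⬝ᵥ A.mulVec (U.mulVec z) = star z ⬝ᵥ (Uᴴ * A * U).mulVec z := by
    intro A z
    rw [Matrix.star_mulVec, ← Matrix.dotProduct_mulVec, Matrix.mulVec_mulVec, Matrix.mulVec_mulVec,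
      Matrix.mul_assoc]
  have hBd : Uᴴ * B * U = Matrix.diagonal (fun i => (d i : ℂ)) := by
    calc Uᴴ * B * U = (Uᴴ * U) * Matrix.diagonal (fun i => (d i : ℂ)) * (Uᴴ * U) := by
          rw [hspec]; simp only [Matrix.mul_assoc]
      _ = _ := by rw [hUU, one_mul, mul_one]
  have hdq : ∀ z : Fin n → ℂ, (star z ⬝ᵥ (Matrix.diagonal (fun i => (d i : ℂ))).mulVec z).re
      = ∑ i, d i * Complex.normSq (z i) := by
    intro z
    simp only [dotProduct, Matrix.mulVec_diagonal, Complex.re_sum, Pi.star_apply]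
    refine Finset.sum_congr rfl fun i _ => ?_
    simp [Complex.normSq_apply]
    ring
  obtain ⟨h1, h2⟩ := aux_diag P Z hZsph hint hinv d hsum (Uᴴ * C * U)
  have cq : ∀ A : Matrix (Fin n) (Fin n) ℂ,
      Continuous fun z : Fin n → ℂ => (star z ⬝ᵥ A.mulVec z).re := by
    intro A
    simp only [dotProduct, Matrix.mulVec]
    fun_prop
  constructor
  · rw [← hinv U hU (fun z => (star z ⬝ᵥ B.mulVec z).re) (cq B)]
    simp only [hquad, hBd, hdq]
    exact h1
  · rw [← hinv U hU (fun z => (star z ⬝ᵥ B.mulVec z).re * (star z ⬝ᵥ C.mulVec z).re)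
      ((cq B).mul (cq C))]
    simp only [hquad, hBd, hdq]
    rw [h2]
    congr 1
    have ht : (B * C).trace = (Matrix.diagonal (fun i => (d i : ℂ)) * (Uᴴ * C * U)).trace := by
      rw [hspec, Matrix.mul_assoc, Matrix.mul_assoc, Matrix.trace_mul_comm]
      simp only [Matrix.mul_assoc]
    rw [ht]
    simp only [Matrix.trace, Matrix.diag_apply, Matrix.diagonal_mul, Complex.re_sum,
      Complex.re_ofReal_mul]
end
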